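/- (Optimism.) Consider any δ ∈ (0,1) and suppose the constant c_b > 0 in the Q-EarlySettled-Advantage algorithm is sufficiently large. Then with probability at least 1 − δ, the iterates of the algorithm satisfy Q_h^k(s,a) ≥ Q_h^*(s,a) and V_h^k(s) ≥ V_h^*(s) simultaneously for all (s, a, k, h) ∈ S × A × [K] × [H]. -/

import Mathlib

open MeasureTheory Finset

/-- A finite-horizon MDP with horizon `H`, non-stationary transition kernels `P h s a ·`,
and deterministic rewards `r h s a ∈ [0,1]`. -/
structure MDP (S A : Type) [Fintype S] [Fintype A] where
  H : ℕ
  P : ℕ → S → A → S → ℝ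
  r : ℕ → S → A → ℝ
  H_pos : 1 ≤ H
  P_nonneg : ∀ h s a s', 0 ≤ P h s a s'
  P_sum_one : ∀ h s a, ∑ s', P h s a s' = 1
  r_nonneg : ∀ h s a, 0 ≤ r h s a
  r_le_one : ∀ h s a, r h s a ≤ 1

namespace MDP

variable {S A : Type} [Fintype S] [Fintype A] [Nonempty S] [Nonempty A]

/-- Optimal Q-function, defined by backward induction on the remaining number of steps
(`Qstar` below instantiates the fuel as `H + 1 - h`, so that values at step `H + 1`
vanish and the Bellman optimality equation holds for `1 ≤ h ≤ H`). -/
noncomputable def QstarAux (M : MDP S A) : ℕ → ℕ → S → A → ℝ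
  | 0, _, _, _ => 0
  | (fuel + 1), h, s, a =>
      M.r h s a + ∑ s' : S, M.P h s a s' *
        (Finset.univ.sup' Finset.univ_nonempty fun a' => QstarAux M fuel (h + 1) s' a')

/-- The optimal Q-function `Q_h^⋆`. -/
noncomputable def Qstar (M : MDP S A) (h : ℕ) (s : S) (a : A) : ℝ :=
  QstarAux M (M.H + 1 - h) h s a

/-- The optimal value function `V_h^⋆`. -/
noncomputable def Vstar (M : MDP S A) (h : ℕ) (s : S) : ℝ :=
  Finset.univ.sup' Finset.univ_nonempty fun a => M.Qstar h s a

/-- Value function `V_h^π` of a deterministic policy `π`, by backward induction. -/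
noncomputable def VpolAux (M : MDP S A) (π : ℕ → S → A) : ℕ → ℕ → S → ℝ
  | 0, _, _ => 0
  | (fuel + 1), h, s =>
      M.r h s (π h s) + ∑ s' : S, M.P h s (π h s) s' * VpolAux M π fuel (h + 1) s'

/-- The value function `V_h^π` of a deterministic policy `π`. -/
noncomputable def Vpol (M : MDP S A) (π : ℕ → S → A) (h : ℕ) (s : S) : ℝ :=
  VpolAux M π (M.H + 1 - h) h s

/-- Conditional variance `Var_{h,s,a}(V) = P_{h,s,a}(V²) - (P_{h,s,a} V)²`. -/
noncomputable def varP (M : MDP S A) (h : ℕ) (s : S) (a : A) (V : S → ℝ) : ℝ :=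
  (∑ s' : S, M.P h s a s' * (V s') ^ 2) - (∑ s' : S, M.P h s a s' * V s') ^ 2

end MDP

/-- The Q-learning rate `η_n = (H+1)/(H+n)`. -/
noncomputable def lr (H n : ℕ) : ℝ := (H + 1 : ℝ) / (H + n)

/-- `η_n^N`: equal to `η_n ∏_{i=n+1}^N (1 - η_i)` for `1 ≤ n ≤ N` (hence `η_n` for `N = n`),
`0` for `N < n`, and `η_0^N = ∏_{i=1}^N (1 - η_i)` (which is `1` if `N = 0` and `0` otherwise,
since `1 - η_1 = 0`). -/
noncomputable def lrProd (H n N : ℕ) : ℝ :=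
  if N < n then 0
  else (if n = 0 then 1 else lr H n) * ∏ i ∈ Finset.Icc (n + 1) N, (1 - lr H i)

/-- The log factor `log(SAT/δ)` with `T = KH`. -/
noncomputable def iota (S A : Type) [Fintype S] [Fintype A] (K H : ℕ) (δ : ℝ) : ℝ :=
  Real.log ((Fintype.card S : ℝ) * (Fintype.card A) * (K * H) / δ)

/-- The trajectory `(s_h^k, a_h^k)` is generated by online interaction with the MDP `M`:
states and actions are adapted to the filtration `𝓕` (with time index `(k-1)H + h`
corresponding to step `h` of episode `k`), and conditionally on the history,
`s_{h+1}^k ∼ P_h(· | s_h^k, a_h^k)`. -/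
def IsMDPTrajectory {S A : Type} [Fintype S] [Fintype A] [DecidableEq S]
    [MeasurableSpace S] [MeasurableSpace A]
    {Ω : Type} [m0 : MeasurableSpace Ω] (μ : Measure Ω)
    (M : MDP S A) (K : ℕ) (𝓕 : Filtration ℕ m0)
    (st : ℕ → ℕ → Ω → S) (ac : ℕ → ℕ → Ω → A) : Prop :=
  (∀ k ∈ Finset.Icc 1 K, ∀ h ∈ Finset.Icc 1 (M.H + 1),
      Measurable[𝓕 ((k - 1) * M.H + h)] (st k h)) ∧
  (∀ k ∈ Finset.Icc 1 K, ∀ h ∈ Finset.Icc 1 M.H,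
      Measurable[𝓕 ((k - 1) * M.H + h)] (ac k h)) ∧
  (∀ k ∈ Finset.Icc 1 K, ∀ h ∈ Finset.Icc 1 M.H, ∀ s' : S,
      μ[(fun ω => if st k (h + 1) ω = s' then (1 : ℝ) else 0) | 𝓕 ((k - 1) * M.H + h)]
        =ᵐ[μ] fun ω => M.P h (st k h ω) (ac k h ω) s')

/-- The **Q-EarlySettled-Advantage** algorithm (Algorithms 1–2 of the paper), run for `K`
episodes on the MDP `M` with bonus constant `cb` and failure probability `δ`.
The fields record the trajectory `(s_h^k, a_h^k)`, the greedy policies `π^k`, the visit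
counters, all Q/value estimates and auxiliary statistics, together with the initialization
and update equations defining the algorithm.  A quantity carrying episode index `k`
denotes its value at the *beginning* of episode `k` (`N k` is the counter at the *end*
of episode `k`, with `N 0 = 0`); `kvis n h s a` is the episode of the `n`-th visit of
`(s,a)` at step `h`. -/
structure QLAlg {S A : Type} [Fintype S] [Fintype A] [Nonempty S] [Nonempty A]
    [DecidableEq S] [DecidableEq A] (M : MDP S A) (K : ℕ) (cb δ : ℝ) where
  /-- `s_h^k` : the state visited at step `h` of episode `k` -/
  st : ℕ → ℕ → S
  /-- `a_h^k` : the action taken at step `h` of episode `k` -/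
  ac : ℕ → ℕ → A
  /-- `π^k` : the greedy policy executed during episode `k` -/
  pol : ℕ → ℕ → S → A
  /-- `N_h^k(s,a)` : number of visits of `(s,a)` at step `h` by the end of episode `k` -/
  N : ℕ → ℕ → S → A → ℕ
  /-- the combined Q-estimate `Q_h^k` -/
  Q : ℕ → ℕ → S → A → ℝ
  /-- the Hoeffding-bonus optimistic estimate `Q_h^{UCB,k}` -/
  QUCB : ℕ → ℕ → S → A → ℝ
  /-- the pessimistic estimate `Q_h^{LCB,k}` -/
  QLCB : ℕ → ℕ → S → A → ℝ
  /-- the reference-advantage estimate `Q_h^{R,k}` -/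
  QR : ℕ → ℕ → S → A → ℝ
  /-- `V_h^k` -/
  V : ℕ → ℕ → S → ℝ
  /-- `V_h^{LCB,k}` -/
  VLCB : ℕ → ℕ → S → ℝ
  /-- the reference value `V_h^{R,k}` -/
  VR : ℕ → ℕ → S → ℝ
  /-- the flag `u_ref^k` governing the final reference update -/
  uref : ℕ → ℕ → S → Prop
  /-- running mean `μ_h^{ref,k}` of the reference -/
  muRef : ℕ → ℕ → S → A → ℝ
  /-- running second moment `σ_h^{ref,k}` of the reference -/
  sigRef : ℕ → ℕ → S → A → ℝ
  /-- running weighted mean `μ_h^{adv,k}` of the advantage -/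
  muAdv : ℕ → ℕ → S → A → ℝ
  /-- running weighted second moment `σ_h^{adv,k}` of the advantage -/
  sigAdv : ℕ → ℕ → S → A → ℝ
  /-- the aggregated bonus `B_h^{R,k}` -/
  BR : ℕ → ℕ → S → A → ℝ
  /-- the bonus difference `δ_h^{R,k}` -/
  dR : ℕ → ℕ → S → A → ℝ
  /-- `bR k h` : the exploration bonus `b_h^R` computed at step `h` of episode `k` -/
  bR : ℕ → ℕ → ℝ
  /-- `kvis n h s a = k_h^n(s,a)` : the episode of the `n`-th visit of `(s,a)` at step `h` -/
  kvis : ℕ → ℕ → S → A → ℕ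
  greedy : ∀ k h s a, Q k h s a ≤ Q k h s (pol k h s)
  act_eq : ∀ k h, ac k h = pol k h (st k h)
  N_init : ∀ h s a, N 0 h s a = 0
  N_upd : ∀ k ∈ Icc 1 K, ∀ h ∈ Icc 1 M.H, ∀ s a,
    N k h s a = N (k - 1) h s a + (if s = st k h ∧ a = ac k h then 1 else 0)
  Q_init : ∀ h ∈ Icc 1 M.H, ∀ s a, Q 1 h s a = M.H
  QUCB_init : ∀ h ∈ Icc 1 M.H, ∀ s a, QUCB 1 h s a = M.H
  QR_init : ∀ h ∈ Icc 1 M.H, ∀ s a, QR 1 h s a = M.H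
  QLCB_init : ∀ h ∈ Icc 1 M.H, ∀ s a, QLCB 1 h s a = 0
  V_init : ∀ h ∈ Icc 1 M.H, ∀ s, V 1 h s = M.H
  VR_init : ∀ h ∈ Icc 1 M.H, ∀ s, VR 1 h s = M.H
  VLCB_init : ∀ h ∈ Icc 1 M.H, ∀ s, VLCB 1 h s = 0
  uref_init : ∀ h s, uref 1 h s
  mom_init : ∀ h s a, muRef 1 h s a = 0 ∧ sigRef 1 h s a = 0 ∧ muAdv 1 h s a = 0 ∧
    sigAdv 1 h s a = 0 ∧ BR 1 h s a = 0 ∧ dR 1 h s a = 0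
  V_terminal : ∀ k s, V k (M.H + 1) s = 0 ∧ VR k (M.H + 1) s = 0 ∧ VLCB k (M.H + 1) s = 0
  QUCB_upd : ∀ k ∈ Icc 1 K, ∀ h ∈ Icc 1 M.H, ∀ s a,
    QUCB (k + 1) h s a =
      if s = st k h ∧ a = ac k h then
        (1 - lr M.H (N k h s a)) * QUCB k h s a
          + lr M.H (N k h s a) *
            (M.r h s a + V k (h + 1) (st k (h + 1))
              + cb * Real.sqrt ((M.H : ℝ) ^ 3 * iota S A K M.H δ / (N k h s a)))
      else QUCB k h s a
  QLCB_upd : ∀ k ∈ Icc 1 K, ∀ h ∈ Icc 1 M.H, ∀ s a,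
    QLCB (k + 1) h s a =
      if s = st k h ∧ a = ac k h then
        (1 - lr M.H (N k h s a)) * QLCB k h s a
          + lr M.H (N k h s a) *
            (M.r h s a + VLCB k (h + 1) (st k (h + 1))
              - cb * Real.sqrt ((M.H : ℝ) ^ 3 * iota S A K M.H δ / (N k h s a)))
      else QLCB k h s a
  muRef_upd : ∀ k ∈ Icc 1 K, ∀ h ∈ Icc 1 M.H, ∀ s a,
    muRef (k + 1) h s a =
      if s = st k h ∧ a = ac k h then
        (1 - 1 / (N k h s a : ℝ)) * muRef k h s a
          + (1 / (N k h s a : ℝ)) * VR k (h + 1) (st k (h + 1))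
      else muRef k h s a
  sigRef_upd : ∀ k ∈ Icc 1 K, ∀ h ∈ Icc 1 M.H, ∀ s a,
    sigRef (k + 1) h s a =
      if s = st k h ∧ a = ac k h then
        (1 - 1 / (N k h s a : ℝ)) * sigRef k h s a
          + (1 / (N k h s a : ℝ)) * (VR k (h + 1) (st k (h + 1))) ^ 2
      else sigRef k h s a
  muAdv_upd : ∀ k ∈ Icc 1 K, ∀ h ∈ Icc 1 M.H, ∀ s a,
    muAdv (k + 1) h s a =
      if s = st k h ∧ a = ac k h then
        (1 - lr M.H (N k h s a)) * muAdv k h s a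
          + lr M.H (N k h s a) * (V k (h + 1) (st k (h + 1)) - VR k (h + 1) (st k (h + 1)))
      else muAdv k h s a
  sigAdv_upd : ∀ k ∈ Icc 1 K, ∀ h ∈ Icc 1 M.H, ∀ s a,
    sigAdv (k + 1) h s a =
      if s = st k h ∧ a = ac k h then
        (1 - lr M.H (N k h s a)) * sigAdv k h s a
          + lr M.H (N k h s a) *
              (V k (h + 1) (st k (h + 1)) - VR k (h + 1) (st k (h + 1))) ^ 2
      else sigAdv k h s a
  BR_upd : ∀ k ∈ Icc 1 K, ∀ h ∈ Icc 1 M.H, ∀ s a,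
    BR (k + 1) h s a =
      if s = st k h ∧ a = ac k h then
        cb * Real.sqrt (iota S A K M.H δ / (N k h s a)) *
          (Real.sqrt (sigRef (k + 1) h s a - (muRef (k + 1) h s a) ^ 2)
            + Real.sqrt (M.H) * Real.sqrt (sigAdv (k + 1) h s a - (muAdv (k + 1) h s a) ^ 2))
      else BR k h s a
  dR_upd : ∀ k ∈ Icc 1 K, ∀ h ∈ Icc 1 M.H, ∀ s a,
    dR (k + 1) h s a =
      if s = st k h ∧ a = ac k h then BR (k + 1) h s a - BR k h s a else dR k h s a
  bR_def : ∀ k ∈ Icc 1 K, ∀ h ∈ Icc 1 M.H,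
    bR k h = BR (k + 1) h (st k h) (ac k h)
      + (1 - lr M.H (N k h (st k h) (ac k h))) * dR (k + 1) h (st k h) (ac k h)
          / lr M.H (N k h (st k h) (ac k h))
      + cb * (M.H : ℝ) ^ 2 * iota S A K M.H δ
          / (N k h (st k h) (ac k h) : ℝ) ^ ((3 : ℝ) / 4)
  QR_upd : ∀ k ∈ Icc 1 K, ∀ h ∈ Icc 1 M.H, ∀ s a,
    QR (k + 1) h s a =
      if s = st k h ∧ a = ac k h then
        (1 - lr M.H (N k h s a)) * QR k h s a
          + lr M.H (N k h s a) *
            (M.r h s a + V k (h + 1) (st k (h + 1)) - VR k (h + 1) (st k (h + 1))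
              + muRef (k + 1) h s a + bR k h)
      else QR k h s a
  Q_upd : ∀ k ∈ Icc 1 K, ∀ h ∈ Icc 1 M.H, ∀ s a,
    Q (k + 1) h s a =
      if s = st k h ∧ a = ac k h then
        min (QR (k + 1) h s a) (min (QUCB (k + 1) h s a) (Q k h s a))
      else Q k h s a
  V_upd : ∀ k ∈ Icc 1 K, ∀ h ∈ Icc 1 M.H, ∀ s,
    V (k + 1) h s =
      if s = st k h then Finset.univ.sup' Finset.univ_nonempty (fun a => Q (k + 1) h s a)
      else V k h s
  VLCB_upd : ∀ k ∈ Icc 1 K, ∀ h ∈ Icc 1 M.H, ∀ s,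
    VLCB (k + 1) h s =
      if s = st k h then
        max (Finset.univ.sup' Finset.univ_nonempty (fun a => QLCB (k + 1) h s a)) (VLCB k h s)
      else VLCB k h s
  VR_upd_pos : ∀ k ∈ Icc 1 K, ∀ h ∈ Icc 1 M.H,
    (1 < V (k + 1) h (st k h) - VLCB (k + 1) h (st k h) ∨ uref k h (st k h)) →
      VR (k + 1) h (st k h) = V (k + 1) h (st k h)
  VR_upd_neg : ∀ k ∈ Icc 1 K, ∀ h ∈ Icc 1 M.H,
    ¬(1 < V (k + 1) h (st k h) - VLCB (k + 1) h (st k h) ∨ uref k h (st k h)) →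
      VR (k + 1) h (st k h) = VR k h (st k h)
  VR_upd_other : ∀ k ∈ Icc 1 K, ∀ h ∈ Icc 1 M.H, ∀ s, s ≠ st k h →
    VR (k + 1) h s = VR k h s
  uref_upd_pos : ∀ k ∈ Icc 1 K, ∀ h ∈ Icc 1 M.H,
    1 < V (k + 1) h (st k h) - VLCB (k + 1) h (st k h) → uref (k + 1) h (st k h)
  uref_upd_neg : ∀ k ∈ Icc 1 K, ∀ h ∈ Icc 1 M.H,
    ¬(1 < V (k + 1) h (st k h) - VLCB (k + 1) h (st k h)) → ¬uref (k + 1) h (st k h)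
  uref_upd_other : ∀ k ∈ Icc 1 K, ∀ h ∈ Icc 1 M.H, ∀ s, s ≠ st k h →
    (uref (k + 1) h s ↔ uref k h s)
  kvis_spec : ∀ h ∈ Icc 1 M.H, ∀ s a n, 1 ≤ n → n ≤ N K h s a →
    kvis n h s a ∈ Icc 1 K ∧ N (kvis n h s a) h s a = n ∧
      st (kvis n h s a) h = s ∧ ac (kvis n h s a) h = a


/-! ### Exponential supermartingale -/

lemma exp_mgf_le {S : Type} [Fintype S] (p g : S → ℝ) (hp : ∀ s, 0 ≤ p s) (hp1 : ∑ s, p s = 1)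
    (hg0 : ∑ s, p s * g s = 0) (hg : ∀ s, |g s| ≤ 1) :
    ∑ s, p s * Real.exp (g s - ∑ t, p t * (g t) ^ 2) ≤ 1 := by
  have h1 : ∀ s, Real.exp (g s) ≤ 1 + g s + (g s) ^ 2 := by
    intro s
    have := (abs_le.1 (Real.abs_exp_sub_one_sub_id_le (hg s))).2
    linarith
  have h2 : ∑ s, p s * Real.exp (g s) ≤ 1 + ∑ t, p t * (g t) ^ 2 := by
    calc ∑ s, p s * Real.exp (g s) ≤ ∑ s, p s * (1 + g s + (g s) ^ 2) :=
          Finset.sum_le_sum fun s _ => mul_le_mul_of_nonneg_left (h1 s) (hp s)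
      _ = ∑ s, p s + ∑ s, p s * g s + ∑ t, p t * (g t) ^ 2 := by
          rw [← Finset.sum_add_distrib, ← Finset.sum_add_distrib]
          exact Finset.sum_congr rfl fun s _ => by ring
      _ = _ := by rw [hp1, hg0]; ring
  have h3 : 1 + ∑ t, p t * (g t) ^ 2 ≤ Real.exp (∑ t, p t * (g t) ^ 2) := by
    have := Real.add_one_le_exp (∑ t, p t * (g t) ^ 2)
    linarith
  have h4 : ∑ s, p s * Real.exp (g s - ∑ t, p t * (g t) ^ 2)
      = (∑ s, p s * Real.exp (g s)) * Real.exp (-∑ t, p t * (g t) ^ 2) := by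
    rw [Finset.sum_mul]
    exact Finset.sum_congr rfl fun s _ => by rw [sub_eq_add_neg, Real.exp_add]; ring
  rw [h4]
  calc _ ≤ Real.exp (∑ t, p t * (g t) ^ 2) * Real.exp (-∑ t, p t * (g t) ^ 2) :=
        mul_le_mul_of_nonneg_right (h2.trans h3) (Real.exp_pos _).le
    _ = 1 := by rw [← Real.exp_add]; simp

lemma supermart_step {S Ω : Type} [Fintype S] [DecidableEq S] [MeasurableSpace S]
    [MeasurableSingletonClass S] (G : MeasurableSpace Ω)
    [m0 : MeasurableSpace Ω] (μ : Measure Ω) [IsProbabilityMeasure μ]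
    (hG : G ≤ m0) (Z : Ω → ℝ) (hZ : Measurable[G] Z) (C : ℝ)
    (hZ0 : ∀ ω, 0 ≤ Z ω) (hZC : ∀ ω, Z ω ≤ C) (ξ : Ω → S) (hξ : Measurable ξ)
    (p g : Ω → S → ℝ) (hpm : ∀ s, Measurable[G] fun ω => p ω s)
    (hgm : ∀ s, Measurable[G] fun ω => g ω s)
    (hp : ∀ ω s, 0 ≤ p ω s) (hp1 : ∀ ω, ∑ s, p ω s = 1)
    (hg0 : ∀ ω, ∑ s, p ω s * g ω s = 0) (hg : ∀ ω s, |g ω s| ≤ 1)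
    (hc : ∀ s, μ[(fun ω => if ξ ω = s then (1 : ℝ) else 0) | G] =ᵐ[μ] fun ω => p ω s) :
    ∫ ω, Z ω * Real.exp (g ω (ξ ω) - ∑ s, p ω s * (g ω s) ^ 2) ∂μ ≤ ∫ ω, Z ω ∂μ := by
  set v : Ω → ℝ := fun ω => ∑ s, p ω s * (g ω s) ^ 2 with hv
  have hvm : Measurable[G] v :=
    Finset.measurable_fun_sum (m := G) _ fun s _ => (hpm s).mul ((hgm s).pow_const 2)
  have hv0 : ∀ ω, 0 ≤ v ω := fun ω => Finset.sum_nonneg fun s _ =>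
    mul_nonneg (hp ω s) (sq_nonneg _)
  set Y : S → Ω → ℝ := fun s ω => Z ω * Real.exp (g ω s - v ω) with hY
  have hYm : ∀ s, Measurable[G] (Y s) := fun s =>
    hZ.mul (Real.measurable_exp.comp ((hgm s).sub hvm))
  have hY0 : ∀ s ω, 0 ≤ Y s ω := fun s ω => mul_nonneg (hZ0 ω) (Real.exp_pos _).le
  have hYC : ∀ s ω, Y s ω ≤ C * Real.exp 1 := fun s ω =>
    mul_le_mul (hZC ω) (Real.exp_le_exp.2 (by linarith [(abs_le.1 (hg ω s)).2, hv0 ω]))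
      (Real.exp_pos _).le ((hZ0 ω).trans (hZC ω))
  have hp_le : ∀ ω s, p ω s ≤ 1 := fun ω s => by
    rw [← hp1 ω]; exact Finset.single_le_sum (f := fun s => p ω s) (fun t _ => hp ω t) (Finset.mem_univ s)
  have hindm : ∀ s, Measurable (fun ω => if ξ ω = s then (1 : ℝ) else 0) := fun s =>
    Measurable.ite (hξ (measurableSet_singleton s)) measurable_const measurable_const
  have hYm0 : ∀ s, Measurable (Y s) := fun s => (hYm s).mono hG le_rfl
  have hint1 : ∀ s, Integrable (fun ω => Y s ω * (if ξ ω = s then (1 : ℝ) else 0)) μ := fun s =>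
    Integrable.of_bound ((hYm0 s).mul (hindm s)).aestronglyMeasurable (C * Real.exp 1)
      (Filter.Eventually.of_forall fun ω => by
        have := hY0 s ω; have := hYC s ω
        rw [Real.norm_eq_abs, abs_le]; split_ifs <;> constructor <;> linarith)
  have hint2 : ∀ s, Integrable (fun ω => Y s ω * p ω s) μ := fun s =>
    Integrable.of_bound ((hYm0 s).mul ((hpm s).mono hG le_rfl)).aestronglyMeasurable
      (C * Real.exp 1)
      (Filter.Eventually.of_forall fun ω => by
        have h1 := hY0 s ω; have h2 := hYC s ω
        have h3 := hp ω s; have h4 := hp_le ω s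
        rw [Real.norm_eq_abs, abs_of_nonneg (mul_nonneg h1 h3)]; nlinarith)
  have hintind : ∀ s, Integrable (fun ω => if ξ ω = s then (1 : ℝ) else 0) μ := fun s =>
    Integrable.of_bound (hindm s).aestronglyMeasurable 1
      (Filter.Eventually.of_forall fun ω => by split_ifs <;> simp)
  have key : ∀ s, ∫ ω, Y s ω * (if ξ ω = s then (1 : ℝ) else 0) ∂μ = ∫ ω, Y s ω * p ω s ∂μ := by
    intro s
    have h1 := condExp_mul_of_stronglyMeasurable_left (m := G) (μ := μ) (f := Y s)
      (g := fun ω => if ξ ω = s then (1 : ℝ) else 0)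
      (hYm s).stronglyMeasurable (hint1 s) (hintind s)
    have h2 : ∫ ω, (μ[Y s * (fun ω => if ξ ω = s then (1 : ℝ) else 0) | G]) ω ∂μ
        = ∫ ω, Y s ω * (if ξ ω = s then (1 : ℝ) else 0) ∂μ := integral_condExp hG
    rw [← h2]
    refine integral_congr_ae ?_
    filter_upwards [h1, hc s] with ω e1 e2
    rw [e1, Pi.mul_apply, e2]
  calc ∫ ω, Z ω * Real.exp (g ω (ξ ω) - v ω) ∂μ
      = ∫ ω, ∑ s, Y s ω * (if ξ ω = s then (1 : ℝ) else 0) ∂μ := by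
        refine integral_congr_ae (Filter.Eventually.of_forall fun ω => ?_)
        simp [hY]
    _ = ∑ s, ∫ ω, Y s ω * (if ξ ω = s then (1 : ℝ) else 0) ∂μ :=
        integral_finsetSum _ fun s _ => hint1 s
    _ = ∑ s, ∫ ω, Y s ω * p ω s ∂μ := Finset.sum_congr rfl fun s _ => key s
    _ = ∫ ω, ∑ s, Y s ω * p ω s ∂μ := (integral_finsetSum _ fun s _ => hint2 s).symm
    _ ≤ ∫ ω, Z ω ∂μ := by
        refine integral_mono (integrable_finsetSum _ fun s _ => hint2 s)
          (Integrable.of_bound (hZ.mono hG le_rfl).aestronglyMeasurable C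
            (Filter.Eventually.of_forall fun ω => by
              rw [Real.norm_eq_abs, abs_of_nonneg (hZ0 ω)]; exact hZC ω)) fun ω => ?_
        have h := exp_mgf_le (p ω) (g ω) (hp ω) (hp1 ω) (hg0 ω) (hg ω)
        calc ∑ s, Y s ω * p ω s = Z ω * ∑ s, p ω s * Real.exp (g ω s - v ω) := by
              rw [Finset.mul_sum]; exact Finset.sum_congr rfl fun s _ => by simp only [hY]; ring
          _ ≤ Z ω * 1 := mul_le_mul_of_nonneg_left h (hZ0 ω)
          _ = Z ω := mul_one _

lemma measurable_eval_finite {S Ω : Type} [Fintype S] [DecidableEq S] [MeasurableSpace S]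
    [MeasurableSingletonClass S] (G : MeasurableSpace Ω) (ξ : Ω → S) (hξ : Measurable[G] ξ)
    (g : Ω → S → ℝ) (hgm : ∀ s, Measurable[G] fun ω => g ω s) :
    Measurable[G] fun ω => g ω (ξ ω) := by
  have : (fun ω => g ω (ξ ω)) = fun ω => ∑ s, if ξ ω = s then g ω s else 0 := by
    funext ω; simp
  rw [this]
  refine Finset.measurable_fun_sum (m := G) _ fun s _ => ?_
  exact Measurable.ite (m := G) (hξ (measurableSet_singleton s)) (hgm s) measurable_const

lemma supermart {S Ω : Type} [Fintype S] [DecidableEq S] [MeasurableSpace S]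
    [MeasurableSingletonClass S] (G : ℕ → MeasurableSpace Ω)
    [m0 : MeasurableSpace Ω] (μ : Measure Ω) [IsProbabilityMeasure μ]
    (K : ℕ) (hG : ∀ k, G k ≤ m0) (hGm : Monotone G)
    (ξ : ℕ → Ω → S) (hξ : ∀ k ∈ Icc 1 K, Measurable[G (k + 1)] (ξ k))
    (p g : ℕ → Ω → S → ℝ) (hpm : ∀ k ∈ Icc 1 K, ∀ s, Measurable[G k] fun ω => p k ω s)
    (hgm : ∀ k ∈ Icc 1 K, ∀ s, Measurable[G k] fun ω => g k ω s)
    (hp : ∀ k ω s, 0 ≤ p k ω s) (hp1 : ∀ k ω, ∑ s, p k ω s = 1)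
    (hg0 : ∀ k ∈ Icc 1 K, ∀ ω, ∑ s, p k ω s * g k ω s = 0)
    (hg : ∀ k ∈ Icc 1 K, ∀ ω s, |g k ω s| ≤ 1)
    (hc : ∀ k ∈ Icc 1 K, ∀ s,
      μ[(fun ω => if ξ k ω = s then (1 : ℝ) else 0) | G k] =ᵐ[μ] fun ω => p k ω s) (L : ℝ) :
    μ.real {ω | L ≤ ∑ j ∈ Icc 1 K, (g j ω (ξ j ω) - ∑ s, p j ω s * (g j ω s) ^ 2)}
      ≤ Real.exp (-L) := by
  set D : ℕ → Ω → ℝ := fun j ω => g j ω (ξ j ω) - ∑ s, p j ω s * (g j ω s) ^ 2 with hD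
  have hDm : ∀ j ∈ Icc 1 K, Measurable[G (j + 1)] (D j) := by
    intro j hj
    have hle : G j ≤ G (j + 1) := hGm (Nat.le_succ j)
    refine Measurable.sub ?_ ?_
    · exact measurable_eval_finite (G (j + 1)) (ξ j) (hξ j hj) _
        fun s => (hgm j hj s).mono hle le_rfl
    · exact Finset.measurable_fun_sum (m := G (j + 1)) _ fun s _ =>
        (((hpm j hj s).mono hle le_rfl).mul (((hgm j hj s).mono hle le_rfl).pow_const 2))
  have hDle : ∀ j ∈ Icc 1 K, ∀ ω, D j ω ≤ 1 := by
    intro j hj ω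
    have h1 := (abs_le.1 (hg j hj ω (ξ j ω))).2
    have h2 : 0 ≤ ∑ s, p j ω s * (g j ω s) ^ 2 :=
      Finset.sum_nonneg fun s _ => mul_nonneg (hp j ω s) (sq_nonneg _)
    simp only [hD]; linarith
  have main : ∀ k ≤ K, Measurable[G (k + 1)] (fun ω => Real.exp (∑ j ∈ Icc 1 k, D j ω)) ∧
      (∀ ω, Real.exp (∑ j ∈ Icc 1 k, D j ω) ≤ Real.exp k) ∧
      ∫ ω, Real.exp (∑ j ∈ Icc 1 k, D j ω) ∂μ ≤ 1 := by
    intro k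
    induction k with
    | zero => intro _; exact ⟨by simp, by simp, by simp⟩
    | succ k ih =>
      intro hk
      obtain ⟨i1, i2, i3⟩ := ih (by omega)
      have hk1 : k + 1 ∈ Icc 1 K := by simp; omega
      have e : ∀ ω, Real.exp (∑ j ∈ Icc 1 (k + 1), D j ω)
          = Real.exp (∑ j ∈ Icc 1 k, D j ω) * Real.exp (D (k + 1) ω) := by
        intro ω
        rw [Finset.sum_Icc_succ_top (by omega), Real.exp_add]
      refine ⟨?_, ?_, ?_⟩
      · simp_rw [e]
        exact (i1.mono (hGm (Nat.le_succ _)) le_rfl).mul (Real.measurable_exp.comp (hDm _ hk1))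
      · intro ω
        rw [e]
        push_cast
        rw [Real.exp_add]
        exact mul_le_mul (i2 ω) (Real.exp_le_exp.2 (hDle _ hk1 ω)) (Real.exp_pos _).le
          (Real.exp_pos _).le
      · simp_rw [e]
        refine le_trans ?_ i3
        exact supermart_step (G (k + 1)) μ (hG _) _ i1 (Real.exp k)
          (fun ω => (Real.exp_pos _).le) i2 (ξ (k + 1)) ((hξ _ hk1).mono (hG _) le_rfl)
          (p (k + 1)) (g (k + 1)) (hpm _ hk1) (hgm _ hk1) (hp _) (hp1 _) (hg0 _ hk1) (hg _ hk1)
          (hc _ hk1)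
  obtain ⟨m1, m2, m3⟩ := main K le_rfl
  have hint : Integrable (fun ω => Real.exp (∑ j ∈ Icc 1 K, D j ω)) μ :=
    Integrable.of_bound (m1.mono (hG _) le_rfl).aestronglyMeasurable (Real.exp K)
      (Filter.Eventually.of_forall fun ω => by
        rw [Real.norm_eq_abs, abs_of_nonneg (Real.exp_pos _).le]; exact m2 ω)
  have mk := mul_meas_ge_le_integral_of_nonneg
    (Filter.Eventually.of_forall fun ω => (Real.exp_pos (∑ j ∈ Icc 1 K, D j ω)).le) hint
    (Real.exp L)
  have hset : {ω | Real.exp L ≤ Real.exp (∑ j ∈ Icc 1 K, D j ω)}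
      = {ω | L ≤ ∑ j ∈ Icc 1 K, D j ω} := by
    ext ω; simp [Real.exp_le_exp]
  rw [hset] at mk
  have := mk.trans m3
  rw [Real.exp_neg, ← one_div, le_div_iff₀ (Real.exp_pos L), mul_comm]
  exact this

/-! ### Learning rates and the averaging operator -/

structure IsRate (ρ : ℕ → ℝ) : Prop where
  pos : ∀ n, 1 ≤ n → 0 < ρ n
  le_one : ∀ n, 1 ≤ n → ρ n ≤ 1
  one : ρ 1 = 1
  step : ∀ n, 1 ≤ n → (1 - ρ (n + 1)) * ρ n ≤ ρ (n + 1)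
  lower : ∀ n : ℕ, 1 ≤ n → 1 / (n : ℝ) ≤ ρ n

lemma isRate_lr (H : ℕ) (hH : 1 ≤ H) : IsRate (lr H) where
  pos n hn := by unfold lr; positivity
  le_one n hn := by
    unfold lr
    have : (1 : ℝ) ≤ n := by exact_mod_cast hn
    rw [div_le_one (by positivity)]; linarith
  one := by unfold lr; push_cast; exact div_self (by positivity)
  step n hn := by
    unfold lr
    have h1 : (1 : ℝ) ≤ n := by exact_mod_cast hn
    have h2 : (1 : ℝ) ≤ H := by exact_mod_cast hH
    push_cast
    have : (1 - ((H : ℝ) + 1) / (H + (n + 1))) = n / (H + (n + 1)) := by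
      field_simp; ring
    rw [this, div_mul_div_comm, div_le_div_iff₀ (by positivity) (by positivity)]
    have : 0 ≤ ((H : ℝ) + 1) * (H + (n + 1)) * H := by positivity
    nlinarith
  lower n hn := by
    unfold lr
    have h1 : (1 : ℝ) ≤ n := by exact_mod_cast hn
    have h2 : (1 : ℝ) ≤ H := by exact_mod_cast hH
    rw [div_le_div_iff₀ (by positivity) (by positivity)]
    nlinarith

lemma isRate_inv : IsRate (fun n => 1 / (n : ℝ)) where
  pos n hn := by positivity
  le_one n hn := by
    have : (1 : ℝ) ≤ n := by exact_mod_cast hn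
    rw [div_le_one (by positivity)]; linarith
  one := by simp
  step n hn := by
    have h1 : (1 : ℝ) ≤ n := by exact_mod_cast hn
    push_cast
    have : (1 - 1 / ((n : ℝ) + 1)) * (1 / n) = 1 / (n + 1) := by field_simp; ring
    rw [this]
  lower n hn := le_rfl

open Classical in
noncomputable def cnt (vis : ℕ → Prop) : ℕ → ℕ
  | 0 => 0
  | k + 1 => cnt vis k + if vis (k + 1) then 1 else 0

open Classical in
noncomputable def avg (ρ : ℕ → ℝ) (vis : ℕ → Prop) (y : ℕ → ℝ) : ℕ → ℝ
  | 0 => 0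
  | k + 1 => if vis (k + 1) then
      (1 - ρ (cnt vis (k + 1))) * avg ρ vis y k + ρ (cnt vis (k + 1)) * y (k + 1)
      else avg ρ vis y k

section
variable {ρ : ℕ → ℝ} {vis : ℕ → Prop}

lemma cnt_pos {k : ℕ} (h : vis (k + 1)) : cnt vis (k + 1) = cnt vis k + 1 := by simp [cnt, h]
lemma cnt_neg {k : ℕ} (h : ¬ vis (k + 1)) : cnt vis (k + 1) = cnt vis k := by simp [cnt, h]
lemma avg_pos (y) {k : ℕ} (h : vis (k + 1)) : avg ρ vis y (k + 1) =
    (1 - ρ (cnt vis (k + 1))) * avg ρ vis y k + ρ (cnt vis (k + 1)) * y (k + 1) := by simp [avg, h]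
lemma avg_neg (y) {k : ℕ} (h : ¬ vis (k + 1)) : avg ρ vis y (k + 1) = avg ρ vis y k := by
  simp [avg, h]
lemma cnt_mono : Monotone (cnt vis) := monotone_nat_of_le_succ fun k => by
  by_cases h : vis (k + 1)
  · rw [cnt_pos h]; omega
  · rw [cnt_neg h]
lemma cnt_ge_one {j : ℕ} (hj : 1 ≤ j) (h : vis j) : 1 ≤ cnt vis j := by
  obtain ⟨j, rfl⟩ : ∃ i, j = i + 1 := ⟨j - 1, by omega⟩
  rw [cnt_pos h]; omega
lemma cnt_le (k : ℕ) : cnt vis k ≤ k := by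
  induction k with
  | zero => simp [cnt]
  | succ k ih =>
    by_cases h : vis (k + 1)
    · rw [cnt_pos h]; omega
    · rw [cnt_neg h]; omega

lemma avg_add (y z : ℕ → ℝ) (k : ℕ) :
    avg ρ vis (fun j => y j + z j) k = avg ρ vis y k + avg ρ vis z k := by
  induction k with
  | zero => simp [avg]
  | succ k ih =>
    by_cases h : vis (k + 1)
    · rw [avg_pos _ h, avg_pos _ h, avg_pos _ h, ih]; ring
    · rw [avg_neg _ h, avg_neg _ h, avg_neg _ h, ih]

lemma avg_mul (c : ℝ) (y : ℕ → ℝ) (k : ℕ) :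
    avg ρ vis (fun j => c * y j) k = c * avg ρ vis y k := by
  induction k with
  | zero => simp [avg]
  | succ k ih =>
    by_cases h : vis (k + 1)
    · rw [avg_pos _ h, avg_pos _ h, ih]; ring
    · rw [avg_neg _ h, avg_neg _ h, ih]

lemma avg_sub (y z : ℕ → ℝ) (k : ℕ) :
    avg ρ vis (fun j => y j - z j) k = avg ρ vis y k - avg ρ vis z k := by
  have h1 := avg_add (ρ := ρ) (vis := vis) y (fun j => (-1) * z j) k
  rw [avg_mul] at h1
  rw [sub_eq_add_neg, ← neg_one_mul, ← h1]
  congr 1; funext j; ring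

lemma avg_mono (hρ : IsRate ρ) {y z : ℕ → ℝ} {k : ℕ}
    (h : ∀ j ∈ Icc 1 k, vis j → y j ≤ z j) : avg ρ vis y k ≤ avg ρ vis z k := by
  induction k with
  | zero => simp [avg]
  | succ k ih =>
    have ih' := ih fun j hj => h j (by simp at hj ⊢; omega)
    by_cases hv : vis (k + 1)
    · rw [avg_pos _ hv, avg_pos _ hv]
      have c1 : 1 ≤ cnt vis (k + 1) := cnt_ge_one (by omega) hv
      have h1 := hρ.pos _ c1
      have h2 := hρ.le_one _ c1
      have h3 := h (k + 1) (by simp) hv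
      have := mul_le_mul_of_nonneg_left ih' (sub_nonneg.2 h2)
      have := mul_le_mul_of_nonneg_left h3 h1.le
      linarith
    · rwa [avg_neg _ hv, avg_neg _ hv]

lemma avg_congr {y z : ℕ → ℝ} {k : ℕ}
    (h : ∀ j ∈ Icc 1 k, vis j → y j = z j) : avg ρ vis y k = avg ρ vis z k := by
  induction k with
  | zero => simp [avg]
  | succ k ih =>
    have ih' := ih fun j hj => h j (by simp at hj ⊢; omega)
    by_cases hv : vis (k + 1)
    · rw [avg_pos _ hv, avg_pos _ hv, ih', h (k + 1) (by simp) hv]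
    · rwa [avg_neg _ hv, avg_neg _ hv]

lemma avg_const (hρ : IsRate ρ) (c : ℝ) (k : ℕ) (hk : 1 ≤ cnt vis k) :
    avg ρ vis (fun _ => c) k = c := by
  induction k with
  | zero => simp [cnt] at hk
  | succ k ih =>
    by_cases hv : vis (k + 1)
    · rw [avg_pos _ hv]
      by_cases h0 : 1 ≤ cnt vis k
      · rw [ih h0]; ring
      · have : cnt vis (k + 1) = 1 := by rw [cnt_pos hv]; omega
        rw [this, hρ.one]; ring
    · rw [cnt_neg hv] at hk
      rw [avg_neg _ hv, ih hk]

lemma avg_sq_le (hρ : IsRate ρ) (y : ℕ → ℝ) (k : ℕ) :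
    (avg ρ vis y k) ^ 2 ≤ avg ρ vis (fun j => (y j) ^ 2) k := by
  induction k with
  | zero => simp [avg]
  | succ k ih =>
    by_cases hv : vis (k + 1)
    · rw [avg_pos _ hv, avg_pos _ hv]
      have c1 : 1 ≤ cnt vis (k + 1) := cnt_ge_one (by omega) hv
      have h1 := hρ.pos _ c1
      have h2 := hρ.le_one _ c1
      set r := ρ (cnt vis (k + 1))
      have e1 := mul_le_mul_of_nonneg_left ih (sub_nonneg.2 h2)
      have e2 := mul_nonneg (mul_nonneg h1.le (sub_nonneg.2 h2))
        (sq_nonneg (avg ρ vis y k - y (k + 1)))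
      nlinarith
    · rwa [avg_neg _ hv, avg_neg _ hv]

lemma avg_abs_le (hρ : IsRate ρ) {y : ℕ → ℝ} {k : ℕ} {B : ℝ} (hk : 1 ≤ cnt vis k)
    (h : ∀ j ∈ Icc 1 k, vis j → |y j| ≤ B) : |avg ρ vis y k| ≤ B := by
  rw [abs_le]
  constructor
  · have := avg_mono (ρ := ρ) (vis := vis) hρ (y := fun _ => -B) (z := y) (k := k)
      fun j hj hv => (abs_le.1 (h j hj hv)).1
    rwa [avg_const hρ _ _ hk] at this
  · have := avg_mono (ρ := ρ) (vis := vis) hρ (z := fun _ => B) (y := y) (k := k)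
      fun j hj hv => (abs_le.1 (h j hj hv)).2
    rwa [avg_const hρ _ _ hk] at this

/-- the weight of visit `n` after `N` visits -/
noncomputable def wt (ρ : ℕ → ℝ) (n N : ℕ) : ℝ := ρ n * ∏ i ∈ Ioc n N, (1 - ρ i)

lemma wt_self (n : ℕ) : wt ρ n n = ρ n := by simp [wt]
lemma wt_succ {n N : ℕ} (h : n ≤ N) : wt ρ n (N + 1) = (1 - ρ (N + 1)) * wt ρ n N := by
  unfold wt
  rw [Finset.prod_Ioc_succ_top h]; ring

lemma wt_bounds (hρ : IsRate ρ) {n N : ℕ} (hn : 1 ≤ n) (h : n ≤ N) :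
    0 ≤ wt ρ n N ∧ wt ρ n N ≤ ρ N := by
  induction N, h using Nat.le_induction with
  | base => rw [wt_self]; exact ⟨(hρ.pos n hn).le, le_rfl⟩
  | succ N hN ih =>
    rw [wt_succ hN]
    have h2 := sub_nonneg.2 (hρ.le_one (N + 1) (by omega))
    exact ⟨mul_nonneg h2 ih.1, (mul_le_mul_of_nonneg_left ih.2 h2).trans (hρ.step N (by omega))⟩

open Classical in
lemma avg_eq_sum (y : ℕ → ℝ) (k : ℕ) : avg ρ vis y k =
    ∑ j ∈ Icc 1 k, if vis j then wt ρ (cnt vis j) (cnt vis k) * y j else 0 := by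
  induction k with
  | zero => simp [avg]
  | succ k ih =>
    rw [Finset.sum_Icc_succ_top (by omega)]
    by_cases hv : vis (k + 1)
    · rw [avg_pos _ hv, if_pos hv, wt_self, ih, Finset.mul_sum]
      congr 1
      refine Finset.sum_congr rfl fun j hj => ?_
      split_ifs with hj'
      · rw [cnt_pos hv, wt_succ (cnt_mono (Finset.mem_Icc.1 hj).2)]; ring
      · simp
    · rw [avg_neg _ hv, if_neg hv, ih, cnt_neg hv, add_zero]

open Classical in
/-- predictable weights for a fixed target count `N` -/
noncomputable def Wt (ρ : ℕ → ℝ) (vis : ℕ → Prop) (N j : ℕ) : ℝ :=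
  if vis j ∧ cnt vis j ≤ N then wt ρ (cnt vis j) N else 0

lemma Wt_bounds (hρ : IsRate ρ) {N j : ℕ} (hN : 1 ≤ N) (hj : 1 ≤ j) :
    0 ≤ Wt ρ vis N j ∧ Wt ρ vis N j ≤ ρ N := by
  unfold Wt
  split_ifs with h
  · exact wt_bounds hρ (cnt_ge_one hj h.1) h.2
  · exact ⟨le_rfl, (hρ.pos N hN).le⟩

lemma sum_Wt (K : ℕ) (y : ℕ → ℝ) {k : ℕ} (hk : k ≤ K) :
    ∑ j ∈ Icc 1 K, Wt ρ vis (cnt vis k) j * y j = avg ρ vis y k := by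
  classical
  rw [avg_eq_sum]
  symm
  have hsub : Icc 1 k ⊆ Icc 1 K := Finset.Icc_subset_Icc le_rfl hk
  rw [← Finset.sum_subset hsub (f := fun j => Wt ρ vis (cnt vis k) j * y j)]
  · refine Finset.sum_congr rfl fun j hj => ?_
    have := cnt_mono (vis := vis) (Finset.mem_Icc.1 hj).2
    unfold Wt
    by_cases hv : vis j <;> simp [hv, this]
  · intro j hj hj'
    have hjk : k + 1 ≤ j := by simp at hj hj'; omega
    unfold Wt
    rw [if_neg, zero_mul]
    rintro ⟨hv, hc⟩
    obtain ⟨i, rfl⟩ : ∃ i, j = i + 1 := ⟨j - 1, by omega⟩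
    rw [cnt_pos hv] at hc
    have := cnt_mono (vis := vis) (show k ≤ i by omega)
    omega

lemma freedman_det (hρ : IsRate ρ) (K : ℕ) (d v : ℕ → ℝ) (B L : ℝ) (hB : 0 < B) (hL : 1 ≤ L)
    (hv0 : ∀ j ∈ Icc 1 K, vis j → 0 ≤ v j) (hvB : ∀ j ∈ Icc 1 K, vis j → v j ≤ B ^ 2)
    (hgood : ∀ N ∈ Icc 1 K, ∀ i ∈ range (K + 1),
      ∑ j ∈ Icc 1 K, ((1 / (2 * B * ρ N * (i + 1)) * Wt ρ vis N j) * d j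
        - (1 / (2 * B * ρ N * (i + 1)) * Wt ρ vis N j) ^ 2 * v j) < L)
    (k : ℕ) (hk : k ∈ Icc 1 K) (hc : 1 ≤ cnt vis k) :
    avg ρ vis d k ≤ 2 * Real.sqrt (ρ (cnt vis k) * L * avg ρ vis v k)
      + 2 * B * ρ (cnt vis k) * L := by
  have hkK := (Finset.mem_Icc.1 hk).2
  set N := cnt vis k with hN
  have hNk : N ≤ k := cnt_le k
  have hr := hρ.pos N hc
  set r := ρ N
  set a := avg ρ vis v k with ha
  have ha0 : 0 ≤ a := by
    have := avg_mono (ρ := ρ) (vis := vis) hρ (y := fun _ => 0) (z := v) (k := k)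
      fun j hj hv => hv0 j (by simp at hj ⊢; omega) hv
    rwa [avg_const hρ _ _ hc] at this
  have haB : a ≤ B ^ 2 := by
    have := avg_mono (ρ := ρ) (vis := vis) hρ (z := fun _ => B ^ 2) (y := v) (k := k)
      fun j hj hv => hvB j (by simp at hj ⊢; omega) hv
    rwa [avg_const hρ _ _ hc] at this
  set b := 2 * B * r with hb
  have hb0 : 0 < b := by positivity
  set q := Real.sqrt (r * a / L) with hq
  have hq0 : 0 ≤ q := Real.sqrt_nonneg _
  have hq2 : q ^ 2 * L = r * a := by
    rw [hq, Real.sq_sqrt (by positivity)]; field_simp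
  set x := q / b with hx
  have hx0 : 0 ≤ x := by positivity
  have hqx : q = b * x := by rw [hx]; field_simp
  have hxK : x ≤ K := by
    have hNr : 1 ≤ r * N := by
      have := hρ.lower N hc
      rwa [div_le_iff₀ (by positivity)] at this
    have h1 : (b * x) ^ 2 * L = r * a := by rw [← hqx, hq2]
    have h2 : 4 * (r * x ^ 2) * (B ^ 2 * L) ≤ 1 * (B ^ 2 * L) := by
      have e : 4 * (r * x ^ 2) * (B ^ 2 * L) * r = r * a := by rw [← h1, hb]; ring
      have e' : 4 * (r * x ^ 2) * (B ^ 2 * L) = a := by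
        have := hr.ne'
        apply mul_right_cancel₀ this; rw [e]; ring
      rw [e']; nlinarith
    have h3 : 4 * (r * x ^ 2) ≤ 1 := le_of_mul_le_mul_right h2 (by positivity)
    have h4 : x ^ 2 ≤ N := by nlinarith [sq_nonneg x]
    have h5 : (1 : ℝ) ≤ N := by exact_mod_cast hc
    have h6 : (N : ℝ) ≤ K := by exact_mod_cast hNk.trans hkK
    nlinarith
  set i := ⌊x⌋₊ with hi
  have hi1 : (i : ℝ) ≤ x := Nat.floor_le hx0
  have hi2 : x < i + 1 := Nat.lt_floor_add_one x
  have hiK : i ∈ range (K + 1) := by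
    have : (i : ℝ) ≤ K := hi1.trans hxK
    have : i ≤ K := by exact_mod_cast this
    simp; omega
  have hg := hgood N (by simp; omega) i hiK
  set lam := 1 / (b * (i + 1)) with hlam
  have hlam0 : 0 < lam := by positivity
  have s1 : ∑ j ∈ Icc 1 K, Wt ρ vis N j * d j = avg ρ vis d k := sum_Wt K d hkK
  have s2 : ∑ j ∈ Icc 1 K, (Wt ρ vis N j) ^ 2 * v j ≤ r * a := by
    rw [ha, ← sum_Wt K v hkK, Finset.mul_sum]
    refine Finset.sum_le_sum fun j hj => ?_
    by_cases hvj : vis j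
    · have w := Wt_bounds (vis := vis) hρ hc (Finset.mem_Icc.1 hj).1
      have := mul_nonneg (mul_nonneg w.1 (hv0 j hj hvj)) (sub_nonneg.2 w.2)
      nlinarith
    · simp [Wt, hvj]
  have s3 : ∑ j ∈ Icc 1 K, ((lam * Wt ρ vis N j) * d j - (lam * Wt ρ vis N j) ^ 2 * v j)
      = lam * avg ρ vis d k - lam ^ 2 * ∑ j ∈ Icc 1 K, (Wt ρ vis N j) ^ 2 * v j := by
    rw [← s1, Finset.mul_sum, Finset.mul_sum, ← Finset.sum_sub_distrib]
    exact Finset.sum_congr rfl fun j _ => by ring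
  rw [s3] at hg
  have hs : Real.sqrt (r * L * a) = q * L := by
    rw [show r * L * a = (q * L) ^ 2 by rw [mul_pow]; linear_combination -L * hq2]
    exact Real.sqrt_sq (by positivity)
  rw [hs]
  have t1 : lam * avg ρ vis d k ≤ L + lam ^ 2 * (r * a) := by
    have := mul_le_mul_of_nonneg_left s2 (sq_nonneg lam)
    linarith
  set c := b * ((i : ℝ) + 1) with hcdef
  have hc0 : 0 < c := by positivity
  have hlc : lam * c = 1 := by rw [hlam]; field_simp
  have hqc : q ≤ c := by rw [hqx]; exact mul_le_mul_of_nonneg_left hi2.le hb0.le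
  have hcq : c ≤ q + b := by rw [hqx, hcdef]; nlinarith
  have t2 : avg ρ vis d k ≤ L * c + lam * (r * a) := by
    have := mul_le_mul_of_nonneg_left t1 hc0.le
    calc avg ρ vis d k = c * (lam * avg ρ vis d k) := by linear_combination (-avg ρ vis d k) * hlc
      _ ≤ _ := this
      _ = L * c + lam * (r * a) := by linear_combination (lam * (r * a)) * hlc
  have t3 : lam * (r * a) ≤ q * L := by
    rw [← hq2]
    have h : q ^ 2 * L ≤ (q * L) * c := by
      have := mul_le_mul_of_nonneg_left hqc (show 0 ≤ q * L by positivity)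
      nlinarith
    calc lam * (q ^ 2 * L) ≤ lam * ((q * L) * c) := mul_le_mul_of_nonneg_left h hlam0.le
      _ = q * L := by linear_combination (q * L) * hlc
  have t4 : L * c ≤ L * (q + b) := mul_le_mul_of_nonneg_left hcq (by linarith)
  linarith

end

/-! ### The algorithm is a function of the trajectory -/

section
variable {S A : Type} [Fintype S] [Fintype A] [Nonempty S] [Nonempty A]
    [DecidableEq S] [DecidableEq A] {M : MDP S A} {K : ℕ} {cb δ : ℝ}

/-- two runs have the same trajectory before episode `k` -/
def HistEq (x y : QLAlg M K cb δ) (k : ℕ) : Prop :=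
  ∀ j, 1 ≤ j → j < k → (∀ h ∈ Icc 1 (M.H + 1), x.st j h = y.st j h) ∧
    (∀ h ∈ Icc 1 M.H, x.ac j h = y.ac j h)

structure Agree (x y : QLAlg M K cb δ) (k : ℕ) : Prop where
  N : ∀ h ∈ Icc 1 M.H, ∀ s a, x.N (k - 1) h s a = y.N (k - 1) h s a
  Q : ∀ h ∈ Icc 1 M.H, ∀ s a, x.Q k h s a = y.Q k h s a
  QUCB : ∀ h ∈ Icc 1 M.H, ∀ s a, x.QUCB k h s a = y.QUCB k h s a
  QLCB : ∀ h ∈ Icc 1 M.H, ∀ s a, x.QLCB k h s a = y.QLCB k h s a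
  QR : ∀ h ∈ Icc 1 M.H, ∀ s a, x.QR k h s a = y.QR k h s a
  muRef : ∀ h ∈ Icc 1 M.H, ∀ s a, x.muRef k h s a = y.muRef k h s a
  sigRef : ∀ h ∈ Icc 1 M.H, ∀ s a, x.sigRef k h s a = y.sigRef k h s a
  muAdv : ∀ h ∈ Icc 1 M.H, ∀ s a, x.muAdv k h s a = y.muAdv k h s a
  sigAdv : ∀ h ∈ Icc 1 M.H, ∀ s a, x.sigAdv k h s a = y.sigAdv k h s a
  BR : ∀ h ∈ Icc 1 M.H, ∀ s a, x.BR k h s a = y.BR k h s a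
  dR : ∀ h ∈ Icc 1 M.H, ∀ s a, x.dR k h s a = y.dR k h s a
  V : ∀ h ∈ Icc 1 (M.H + 1), ∀ s, x.V k h s = y.V k h s
  VLCB : ∀ h ∈ Icc 1 (M.H + 1), ∀ s, x.VLCB k h s = y.VLCB k h s
  VR : ∀ h ∈ Icc 1 (M.H + 1), ∀ s, x.VR k h s = y.VR k h s
  uref : ∀ h ∈ Icc 1 M.H, ∀ s, x.uref k h s ↔ y.uref k h s

lemma Icc_succ_cases {H h : ℕ} (hh : h ∈ Icc 1 (H + 1)) : h ∈ Icc 1 H ∨ h = H + 1 := by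
  simp at hh ⊢; omega

lemma Icc_succ_mem {H h : ℕ} (hh : h ∈ Icc 1 H) :
    h ∈ Icc 1 (H + 1) ∧ h + 1 ∈ Icc 1 (H + 1) := by
  simp at hh ⊢; omega

lemma agree_one (x y : QLAlg M K cb δ) : Agree x y 1 where
  N h hh s a := by rw [Nat.sub_self, x.N_init, y.N_init]
  Q h hh s a := by rw [x.Q_init h hh, y.Q_init h hh]
  QUCB h hh s a := by rw [x.QUCB_init h hh, y.QUCB_init h hh]
  QLCB h hh s a := by rw [x.QLCB_init h hh, y.QLCB_init h hh]
  QR h hh s a := by rw [x.QR_init h hh, y.QR_init h hh]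
  muRef h hh s a := by rw [(x.mom_init h s a).1, (y.mom_init h s a).1]
  sigRef h hh s a := by rw [(x.mom_init h s a).2.1, (y.mom_init h s a).2.1]
  muAdv h hh s a := by rw [(x.mom_init h s a).2.2.1, (y.mom_init h s a).2.2.1]
  sigAdv h hh s a := by rw [(x.mom_init h s a).2.2.2.1, (y.mom_init h s a).2.2.2.1]
  BR h hh s a := by rw [(x.mom_init h s a).2.2.2.2.1, (y.mom_init h s a).2.2.2.2.1]
  dR h hh s a := by rw [(x.mom_init h s a).2.2.2.2.2, (y.mom_init h s a).2.2.2.2.2]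
  V h hh s := by
    rcases Icc_succ_cases hh with hh | rfl
    · rw [x.V_init h hh, y.V_init h hh]
    · rw [(x.V_terminal 1 s).1, (y.V_terminal 1 s).1]
  VLCB h hh s := by
    rcases Icc_succ_cases hh with hh | rfl
    · rw [x.VLCB_init h hh, y.VLCB_init h hh]
    · rw [(x.V_terminal 1 s).2.2, (y.V_terminal 1 s).2.2]
  VR h hh s := by
    rcases Icc_succ_cases hh with hh | rfl
    · rw [x.VR_init h hh, y.VR_init h hh]
    · rw [(x.V_terminal 1 s).2.1, (y.V_terminal 1 s).2.1]
  uref h hh s := ⟨fun _ => y.uref_init h s, fun _ => x.uref_init h s⟩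

lemma agree_succ (x y : QLAlg M K cb δ) (k : ℕ) (hk : k ∈ Icc 1 K) (g : Agree x y k)
    (hst : ∀ h ∈ Icc 1 (M.H + 1), x.st k h = y.st k h)
    (hac : ∀ h ∈ Icc 1 M.H, x.ac k h = y.ac k h) : Agree x y (k + 1) := by
  have hst1 : ∀ h ∈ Icc 1 M.H, x.st k h = y.st k h := fun h hh => hst h (Icc_succ_mem hh).1
  have hst2 : ∀ h ∈ Icc 1 M.H, x.st k (h + 1) = y.st k (h + 1) :=
    fun h hh => hst _ (Icc_succ_mem hh).2
  have hV2 : ∀ h ∈ Icc 1 M.H, ∀ s, x.V k (h + 1) s = y.V k (h + 1) s :=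
    fun h hh => g.V _ (Icc_succ_mem hh).2
  have hVR2 : ∀ h ∈ Icc 1 M.H, ∀ s, x.VR k (h + 1) s = y.VR k (h + 1) s :=
    fun h hh => g.VR _ (Icc_succ_mem hh).2
  have hVL2 : ∀ h ∈ Icc 1 M.H, ∀ s, x.VLCB k (h + 1) s = y.VLCB k (h + 1) s :=
    fun h hh => g.VLCB _ (Icc_succ_mem hh).2
  have eN : ∀ h ∈ Icc 1 M.H, ∀ s a, x.N k h s a = y.N k h s a := fun h hh s a => by
    rw [x.N_upd k hk h hh, y.N_upd k hk h hh, g.N h hh, hst1 h hh, hac h hh]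
  have eQUCB : ∀ h ∈ Icc 1 M.H, ∀ s a, x.QUCB (k + 1) h s a = y.QUCB (k + 1) h s a :=
    fun h hh s a => by
      rw [x.QUCB_upd k hk h hh, y.QUCB_upd k hk h hh, g.QUCB h hh, hst1 h hh, hac h hh, eN h hh,
        hst2 h hh, hV2 h hh]
  have eQLCB : ∀ h ∈ Icc 1 M.H, ∀ s a, x.QLCB (k + 1) h s a = y.QLCB (k + 1) h s a :=
    fun h hh s a => by
      rw [x.QLCB_upd k hk h hh, y.QLCB_upd k hk h hh, g.QLCB h hh, hst1 h hh, hac h hh, eN h hh,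
        hst2 h hh, hVL2 h hh]
  have emuRef : ∀ h ∈ Icc 1 M.H, ∀ s a, x.muRef (k + 1) h s a = y.muRef (k + 1) h s a :=
    fun h hh s a => by
      rw [x.muRef_upd k hk h hh, y.muRef_upd k hk h hh, g.muRef h hh, hst1 h hh, hac h hh, eN h hh,
        hst2 h hh, hVR2 h hh]
  have esigRef : ∀ h ∈ Icc 1 M.H, ∀ s a, x.sigRef (k + 1) h s a = y.sigRef (k + 1) h s a :=
    fun h hh s a => by
      rw [x.sigRef_upd k hk h hh, y.sigRef_upd k hk h hh, g.sigRef h hh, hst1 h hh, hac h hh,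
        eN h hh, hst2 h hh, hVR2 h hh]
  have emuAdv : ∀ h ∈ Icc 1 M.H, ∀ s a, x.muAdv (k + 1) h s a = y.muAdv (k + 1) h s a :=
    fun h hh s a => by
      rw [x.muAdv_upd k hk h hh, y.muAdv_upd k hk h hh, g.muAdv h hh, hst1 h hh, hac h hh, eN h hh,
        hst2 h hh, hVR2 h hh, hV2 h hh]
  have esigAdv : ∀ h ∈ Icc 1 M.H, ∀ s a, x.sigAdv (k + 1) h s a = y.sigAdv (k + 1) h s a :=
    fun h hh s a => by
      rw [x.sigAdv_upd k hk h hh, y.sigAdv_upd k hk h hh, g.sigAdv h hh, hst1 h hh, hac h hh,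
        eN h hh, hst2 h hh, hVR2 h hh, hV2 h hh]
  have eBR : ∀ h ∈ Icc 1 M.H, ∀ s a, x.BR (k + 1) h s a = y.BR (k + 1) h s a :=
    fun h hh s a => by
      rw [x.BR_upd k hk h hh, y.BR_upd k hk h hh, g.BR h hh, hst1 h hh, hac h hh, eN h hh,
        esigRef h hh, emuRef h hh, esigAdv h hh, emuAdv h hh]
  have edR : ∀ h ∈ Icc 1 M.H, ∀ s a, x.dR (k + 1) h s a = y.dR (k + 1) h s a :=
    fun h hh s a => by
      rw [x.dR_upd k hk h hh, y.dR_upd k hk h hh, g.BR h hh, hst1 h hh, hac h hh, eBR h hh,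
        g.dR h hh]
  have ebR : ∀ h ∈ Icc 1 M.H, x.bR k h = y.bR k h := fun h hh => by
    rw [x.bR_def k hk h hh, y.bR_def k hk h hh, hst1 h hh, hac h hh, eBR h hh, edR h hh, eN h hh]
  have eQR : ∀ h ∈ Icc 1 M.H, ∀ s a, x.QR (k + 1) h s a = y.QR (k + 1) h s a :=
    fun h hh s a => by
      rw [x.QR_upd k hk h hh, y.QR_upd k hk h hh, g.QR h hh, hst1 h hh, hac h hh, eN h hh,
        hst2 h hh, hV2 h hh, hVR2 h hh, emuRef h hh, ebR h hh]
  have eQ : ∀ h ∈ Icc 1 M.H, ∀ s a, x.Q (k + 1) h s a = y.Q (k + 1) h s a :=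
    fun h hh s a => by
      rw [x.Q_upd k hk h hh, y.Q_upd k hk h hh, g.Q h hh, hst1 h hh, hac h hh, eQUCB h hh,
        eQR h hh]
  have eV : ∀ h ∈ Icc 1 M.H, ∀ s, x.V (k + 1) h s = y.V (k + 1) h s := fun h hh s => by
    rw [x.V_upd k hk h hh, y.V_upd k hk h hh, g.V h (Icc_succ_mem hh).1, hst1 h hh]
    simp_rw [eQ h hh]
  have eVL : ∀ h ∈ Icc 1 M.H, ∀ s, x.VLCB (k + 1) h s = y.VLCB (k + 1) h s := fun h hh s => by
    rw [x.VLCB_upd k hk h hh, y.VLCB_upd k hk h hh, g.VLCB h (Icc_succ_mem hh).1, hst1 h hh]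
    simp_rw [eQLCB h hh]
  refine ⟨by simpa using eN, eQ, eQUCB, eQLCB, eQR, emuRef, esigRef, emuAdv, esigAdv, eBR, edR,
    ?_, ?_, ?_, ?_⟩
  · intro h hh s
    rcases Icc_succ_cases hh with hh | rfl
    · exact eV h hh s
    · rw [(x.V_terminal (k + 1) s).1, (y.V_terminal (k + 1) s).1]
  · intro h hh s
    rcases Icc_succ_cases hh with hh | rfl
    · exact eVL h hh s
    · rw [(x.V_terminal (k + 1) s).2.2, (y.V_terminal (k + 1) s).2.2]
  · intro h hh s
    rcases Icc_succ_cases hh with hh | rfl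
    · by_cases hs : s = x.st k h
      · have hs' : s = y.st k h := by rw [← hst1 h hh]; exact hs
        have hiff : (1 < x.V (k + 1) h (x.st k h) - x.VLCB (k + 1) h (x.st k h)
            ∨ x.uref k h (x.st k h)) ↔ (1 < y.V (k + 1) h (y.st k h)
            - y.VLCB (k + 1) h (y.st k h) ∨ y.uref k h (y.st k h)) := by
          rw [eV h hh, eVL h hh, g.uref h hh, hst1 h hh]
        by_cases hc : (1 < x.V (k + 1) h (x.st k h) - x.VLCB (k + 1) h (x.st k h)
            ∨ x.uref k h (x.st k h))
        · have e1 := x.VR_upd_pos k hk h hh hc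
          have e2 := y.VR_upd_pos k hk h hh (hiff.1 hc)
          rw [← hs] at e1
          rw [← hs'] at e2
          rw [e1, e2, eV h hh]
        · have e1 := x.VR_upd_neg k hk h hh hc
          have e2 := y.VR_upd_neg k hk h hh (fun hc' => hc (hiff.2 hc'))
          rw [← hs] at e1
          rw [← hs'] at e2
          rw [e1, e2, g.VR h (Icc_succ_mem hh).1]
      · have hs' : s ≠ y.st k h := by rw [← hst1 h hh]; exact hs
        rw [x.VR_upd_other k hk h hh s hs, y.VR_upd_other k hk h hh s hs',
          g.VR h (Icc_succ_mem hh).1]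
    · rw [(x.V_terminal (k + 1) s).2.1, (y.V_terminal (k + 1) s).2.1]
  · intro h hh s
    by_cases hs : s = x.st k h
    · have hs' : s = y.st k h := by rw [← hst1 h hh]; exact hs
      have hiff : (1 < x.V (k + 1) h (x.st k h) - x.VLCB (k + 1) h (x.st k h)) ↔
          (1 < y.V (k + 1) h (y.st k h) - y.VLCB (k + 1) h (y.st k h)) := by
        rw [eV h hh, eVL h hh, hst1 h hh]
      by_cases hc : (1 < x.V (k + 1) h (x.st k h) - x.VLCB (k + 1) h (x.st k h))
      · have e1 := x.uref_upd_pos k hk h hh hc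
        have e2 := y.uref_upd_pos k hk h hh (hiff.1 hc)
        rw [← hs] at e1
        rw [← hs'] at e2
        exact iff_of_true e1 e2
      · have e1 := x.uref_upd_neg k hk h hh hc
        have e2 := y.uref_upd_neg k hk h hh (fun hc' => hc (hiff.2 hc'))
        rw [← hs] at e1
        rw [← hs'] at e2
        exact iff_of_false e1 e2
    · have hs' : s ≠ y.st k h := by rw [← hst1 h hh]; exact hs
      rw [x.uref_upd_other k hk h hh s hs, y.uref_upd_other k hk h hh s hs', g.uref h hh]

lemma agree_of_histEq (x y : QLAlg M K cb δ) (k : ℕ) (hk : k ≤ K) (h : HistEq x y (k + 1)) :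
    Agree x y (k + 1) := by
  induction k with
  | zero => exact agree_one x y
  | succ k ih =>
    have h1 := h (k + 1) (by omega) (by omega)
    exact agree_succ x y (k + 1) (by simp; omega)
      (ih (by omega) fun j hj hj' => h j hj (by omega)) h1.1 h1.2

/-- the visits of `(s,a)` at step `h` -/
def visA (x : QLAlg M K cb δ) (h : ℕ) (s : S) (a : A) : ℕ → Prop :=
  fun k => s = x.st k h ∧ a = x.ac k h

/-- the Freedman-type concentration bound for the averages of the family `f` -/
def Conc (x : QLAlg M K cb δ) (ρ : ℕ → ℝ) (f : ℕ → ℕ → S → ℝ) (B L : ℝ) : Prop :=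
  ∀ h ∈ Icc 1 M.H, ∀ s a, ∀ k ∈ Icc 1 K, 1 ≤ cnt (visA x h s a) k →
    avg ρ (visA x h s a) (fun j => f h j (x.st j (h + 1)) - ∑ t, M.P h s a t * f h j t) k ≤
      2 * Real.sqrt (ρ (cnt (visA x h s a) k) * L *
        avg ρ (visA x h s a) (fun j => M.varP h s a (f h j)) k)
      + 2 * B * ρ (cnt (visA x h s a) k) * L

lemma varP_eq (h : ℕ) (s : S) (a : A) (f : S → ℝ) :
    ∑ t, M.P h s a t * (f t - ∑ u, M.P h s a u * f u) ^ 2 = M.varP h s a f := by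
  set m := ∑ u, M.P h s a u * f u with hm
  have e : ∀ t, M.P h s a t * (f t - m) ^ 2 = M.P h s a t * (f t) ^ 2
      - 2 * m * (M.P h s a t * f t) + m ^ 2 * M.P h s a t := fun t => by ring
  simp_rw [e]
  rw [Finset.sum_add_distrib, Finset.sum_sub_distrib, ← Finset.mul_sum, ← Finset.mul_sum, ← hm,
    M.P_sum_one]
  unfold MDP.varP
  rw [← hm]; ring

lemma varP_nonneg (h : ℕ) (s : S) (a : A) (f : S → ℝ) : 0 ≤ M.varP h s a f := by
  rw [← varP_eq]
  exact Finset.sum_nonneg fun t _ => mul_nonneg (M.P_nonneg h s a t) (sq_nonneg _)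

lemma P_le (h : ℕ) (s : S) (a : A) (f : S → ℝ) (B : ℝ) (hf : ∀ t, f t ≤ B) :
    ∑ t, M.P h s a t * f t ≤ B := by
  calc ∑ t, M.P h s a t * f t ≤ ∑ t, M.P h s a t * B :=
        Finset.sum_le_sum fun t _ => mul_le_mul_of_nonneg_left (hf t) (M.P_nonneg h s a t)
    _ = B := by rw [← Finset.sum_mul, M.P_sum_one, one_mul]

lemma P_mono (h : ℕ) (s : S) (a : A) (f g : S → ℝ) (hf : ∀ t, f t ≤ g t) :
    ∑ t, M.P h s a t * f t ≤ ∑ t, M.P h s a t * g t :=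
  Finset.sum_le_sum fun t _ => mul_le_mul_of_nonneg_left (hf t) (M.P_nonneg h s a t)

lemma P_abs (h : ℕ) (s : S) (a : A) (f : S → ℝ) (B : ℝ) (hf : ∀ t, |f t| ≤ B) :
    |∑ t, M.P h s a t * f t| ≤ B := by
  rw [abs_le]
  refine ⟨?_, P_le h s a f B fun t => (abs_le.1 (hf t)).2⟩
  have := P_le (M := M) h s a (fun t => - f t) B fun t => by linarith [(abs_le.1 (hf t)).1]
  simp only [mul_neg, Finset.sum_neg_distrib] at this
  linarith

lemma varP_le (h : ℕ) (s : S) (a : A) (f : S → ℝ) (B : ℝ) (hf : ∀ t, |f t| ≤ B) :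
    M.varP h s a f ≤ B ^ 2 := by
  unfold MDP.varP
  have := P_le (M := M) h s a (fun t => (f t) ^ 2) (B ^ 2) fun t => by
    rw [← sq_abs]; exact pow_le_pow_left₀ (abs_nonneg _) (hf t) 2
  have := sq_nonneg (∑ s', M.P h s a s' * f s')
  linarith

lemma cnt_congr {v v' : ℕ → Prop} {k : ℕ} (h : ∀ j ∈ Icc 1 k, (v j ↔ v' j)) :
    cnt v k = cnt v' k := by
  induction k with
  | zero => rfl
  | succ k ih =>
    have := ih fun j hj => h j (by simp at hj ⊢; omega)
    have h1 := h (k + 1) (by simp)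
    by_cases hv : v (k + 1)
    · rw [cnt_pos hv, cnt_pos (h1.1 hv), this]
    · rw [cnt_neg hv, cnt_neg (fun h => hv (h1.2 h)), this]

lemma Wt_congr {ρ : ℕ → ℝ} {v v' : ℕ → Prop} {k N : ℕ} (hk : 1 ≤ k)
    (h : ∀ j ∈ Icc 1 k, (v j ↔ v' j)) : Wt ρ v N k = Wt ρ v' N k := by
  unfold Wt
  rw [cnt_congr h, h k (by simp; omega)]

lemma meas_factor {Ω τ β : Type} (G : MeasurableSpace Ω) [Finite τ] [MeasurableSpace τ]
    [MeasurableSingletonClass τ] [MeasurableSpace β] (T : Ω → τ) (hT : Measurable[G] T) (f : Ω → β)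
    (hf : ∀ ω ω', T ω = T ω' → f ω = f ω') : Measurable[G] f := by
  intro B hB
  have : f ⁻¹' B = T ⁻¹' (T '' (f ⁻¹' B)) := by
    ext ω
    constructor
    · intro h; exact ⟨ω, h, rfl⟩
    · rintro ⟨ω', h', e⟩
      rw [Set.mem_preimage, ← hf _ _ e]; exact h'
  rw [this]
  exact hT (Set.toFinite _).measurableSet

end

/-! ### Concentration -/

lemma meas_pi_pi {Ω ι κ β : Type} (G : MeasurableSpace Ω) [MeasurableSpace β] (f : Ω → ι → κ → β)
    (h : ∀ i j, Measurable[G] fun ω => f ω i j) : Measurable[G] f :=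
  measurable_pi_lambda _ fun i => measurable_pi_lambda _ fun j => h i j

section
variable {S A : Type} [Fintype S] [Fintype A] [Nonempty S] [Nonempty A]
    [DecidableEq S] [DecidableEq A] [MeasurableSpace S] [MeasurableSingletonClass S]
    [MeasurableSpace A] [MeasurableSingletonClass A] {M : MDP S A} {K : ℕ} {cb δ : ℝ}
    {Ω : Type} [m0 : MeasurableSpace Ω] {μ : Measure Ω}
    {𝓕 : Filtration ℕ m0} {alg : Ω → QLAlg M K cb δ}

lemma meas_of_hist (htr : IsMDPTrajectory μ M K 𝓕 (fun k h ω => (alg ω).st k h)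
      (fun k h ω => (alg ω).ac k h)) (k h : ℕ) (hk : k ∈ Icc 1 K) (hh : h ∈ Icc 1 M.H)
    {β : Type} [MeasurableSpace β] (f : Ω → β)
    (hf : ∀ ω ω', HistEq (alg ω) (alg ω') k → (alg ω).st k h = (alg ω').st k h →
      (alg ω).ac k h = (alg ω').ac k h → f ω = f ω') :
    Measurable[𝓕 ((k - 1) * M.H + h)] f := by
  obtain ⟨h1, h2, -⟩ := htr
  have hk' := Finset.mem_Icc.1 hk
  have hh' := Finset.mem_Icc.1 hh
  let s0 : S := Classical.arbitrary S
  let a0 : A := Classical.arbitrary A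
  let T : Ω → (Fin (K + 1) → Fin (M.H + 2) → S) × (Fin (K + 1) → Fin (M.H + 2) → A) := fun ω =>
    (fun j i => if ((j : ℕ) - 1) * M.H + i ≤ (k - 1) * M.H + h ∧ (j : ℕ) ∈ Icc 1 K ∧
        (i : ℕ) ∈ Icc 1 (M.H + 1) then (alg ω).st j i else s0,
     fun j i => if ((j : ℕ) - 1) * M.H + i ≤ (k - 1) * M.H + h ∧ (j : ℕ) ∈ Icc 1 K ∧
        (i : ℕ) ∈ Icc 1 M.H then (alg ω).ac j i else a0)
  have hT : Measurable[𝓕 ((k - 1) * M.H + h)] T := by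
    refine Measurable.prodMk ?_ ?_
    · refine meas_pi_pi _ _ fun j i => ?_
      by_cases hc : ((j : ℕ) - 1) * M.H + i ≤ (k - 1) * M.H + h ∧ (j : ℕ) ∈ Icc 1 K ∧
        (i : ℕ) ∈ Icc 1 (M.H + 1)
      · simp only [if_pos hc]
        exact (h1 j hc.2.1 i hc.2.2).mono (𝓕.mono hc.1) le_rfl
      · simp only [if_neg hc]
        exact measurable_const
    · refine meas_pi_pi _ _ fun j i => ?_
      by_cases hc : ((j : ℕ) - 1) * M.H + i ≤ (k - 1) * M.H + h ∧ (j : ℕ) ∈ Icc 1 K ∧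
        (i : ℕ) ∈ Icc 1 M.H
      · simp only [if_pos hc]
        exact (h2 j hc.2.1 i hc.2.2).mono (𝓕.mono hc.1) le_rfl
      · simp only [if_neg hc]
        exact measurable_const
  refine meas_factor _ T hT f fun ω ω' e => ?_
  have eS : ∀ j i, ((j : ℕ) - 1) * M.H + i ≤ (k - 1) * M.H + h → j ∈ Icc 1 K →
      i ∈ Icc 1 (M.H + 1) → (alg ω).st j i = (alg ω').st j i := by
    intro j i c1 c2 c3
    have c2' := Finset.mem_Icc.1 c2
    have c3' := Finset.mem_Icc.1 c3
    have := congrFun (congrFun (congrArg Prod.fst e) ⟨j, by omega⟩) ⟨i, by omega⟩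
    simpa only [T, if_pos (And.intro c1 (And.intro c2 c3))] using this
  have eA : ∀ j i, ((j : ℕ) - 1) * M.H + i ≤ (k - 1) * M.H + h → j ∈ Icc 1 K →
      i ∈ Icc 1 M.H → (alg ω).ac j i = (alg ω').ac j i := by
    intro j i c1 c2 c3
    have c2' := Finset.mem_Icc.1 c2
    have c3' := Finset.mem_Icc.1 c3
    have := congrFun (congrFun (congrArg Prod.snd e) ⟨j, by omega⟩) ⟨i, by omega⟩
    simpa only [T, if_pos (And.intro c1 (And.intro c2 c3))] using this
  have hle : ∀ j i, 1 ≤ j → j < k → i ≤ M.H + 1 →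
      (j - 1) * M.H + i ≤ (k - 1) * M.H + h := by
    intro j i j1 j2 i1
    have : (j - 1 + 1) * M.H ≤ (k - 1) * M.H := Nat.mul_le_mul_right _ (by omega)
    rw [Nat.add_mul] at this
    omega
  refine hf ω ω' ?_ (eS k h le_rfl hk (Icc_succ_mem hh).1) (eA k h le_rfl hk hh)
  intro j j1 j2
  refine ⟨fun i hi => eS j i (hle j i j1 j2 (Finset.mem_Icc.1 hi).2) ?_ hi,
    fun i hi => eA j i (hle j i j1 j2 ?_) ?_ hi⟩
  · simp; omega
  · have := (Finset.mem_Icc.1 hi).2; omega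
  · simp; omega

lemma conc_single [IsProbabilityMeasure μ]
    (htr : IsMDPTrajectory μ M K 𝓕 (fun k h ω => (alg ω).st k h) (fun k h ω => (alg ω).ac k h))
    {ρ : ℕ → ℝ} (hρ : IsRate ρ) (F : QLAlg M K cb δ → ℕ → ℕ → S → ℝ) {B : ℝ} (hB : 0 < B)
    (hF : ∀ x h k s, |F x h k s| ≤ B)
    (hdep : ∀ x y, ∀ h ∈ Icc 1 M.H, ∀ k ∈ Icc 1 K, HistEq x y k → F x h k = F y h k)
    (L : ℝ) (h : ℕ) (hh : h ∈ Icc 1 M.H) (s : S) (a : A) (N : ℕ) (hN : 1 ≤ N) (i : ℕ) :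
    μ.real {ω | L ≤ ∑ j ∈ Icc 1 K,
      ((1 / (2 * B * ρ N * (i + 1)) * Wt ρ (visA (alg ω) h s a) N j) *
          (F (alg ω) h j ((alg ω).st j (h + 1)) - ∑ t, M.P h s a t * F (alg ω) h j t)
        - (1 / (2 * B * ρ N * (i + 1)) * Wt ρ (visA (alg ω) h s a) N j) ^ 2 *
          M.varP h s a (F (alg ω) h j))} ≤ Real.exp (-L) := by
  have hr := hρ.pos N hN
  have hh' := Finset.mem_Icc.1 hh
  set lam : ℝ := 1 / (2 * B * ρ N * (i + 1)) with hlam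
  have hlam0 : 0 < lam := by positivity
  set G : ℕ → MeasurableSpace Ω := fun k => 𝓕 ((k - 1) * M.H + h) with hGdef
  set p : ℕ → Ω → S → ℝ := fun k ω t => M.P h ((alg ω).st k h) ((alg ω).ac k h) t with hpdef
  set g : ℕ → Ω → S → ℝ := fun k ω t => lam * Wt ρ (visA (alg ω) h s a) N k *
    (F (alg ω) h k t - ∑ u, M.P h s a u * F (alg ω) h k u) with hgdef
  have hW0 : ∀ k ω, ¬ visA (alg ω) h s a k → Wt ρ (visA (alg ω) h s a) N k = 0 := by
    intro k ω hv
    simp [Wt, hv]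
  have hpv : ∀ k ω, visA (alg ω) h s a k → p k ω = M.P h s a := by
    intro k ω hv
    funext t
    simp only [hpdef]
    rw [← hv.1, ← hv.2]
  have hvar : ∀ k ω, ∑ t, p k ω t * (g k ω t) ^ 2
      = (lam * Wt ρ (visA (alg ω) h s a) N k) ^ 2 * M.varP h s a (F (alg ω) h k) := by
    intro k ω
    by_cases hv : visA (alg ω) h s a k
    · rw [hpv k ω hv, ← varP_eq, Finset.mul_sum]
      exact Finset.sum_congr rfl fun t _ => by simp only [hgdef]; ring
    · simp [hgdef, hW0 k ω hv]
  have key := supermart G μ K (fun k => 𝓕.le _) ?_ (fun k ω => (alg ω).st k (h + 1)) ?_ p g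
    ?_ ?_ ?_ ?_ ?_ ?_ ?_ L
  · simp_rw [hvar] at key
    exact key
  · intro k k' hkk
    exact 𝓕.mono (by gcongr)
  · intro k hk
    have hk' := Finset.mem_Icc.1 hk
    refine (htr.1 k hk (h + 1) (Icc_succ_mem hh).2).mono (𝓕.mono ?_) le_rfl
    have h1 := M.H_pos
    obtain ⟨k, rfl⟩ : ∃ i, k = i + 1 := ⟨k - 1, by omega⟩
    simp only [Nat.add_sub_cancel]
    rw [Nat.add_mul]; omega
  · intro k hk t
    exact meas_of_hist htr k h hk hh _ fun ω ω' _ e1 e2 => by simp only [hpdef, e1, e2]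
  · intro k hk t
    refine meas_of_hist htr k h hk hh _ fun ω ω' e0 e1 e2 => ?_
    have hk' := Finset.mem_Icc.1 hk
    have eW : Wt ρ (visA (alg ω) h s a) N k = Wt ρ (visA (alg ω') h s a) N k := by
      refine Wt_congr hk'.1 fun j hj => ?_
      have hj' := Finset.mem_Icc.1 hj
      unfold visA
      rcases Nat.lt_or_ge j k with hlt | hge
      · have := e0 j hj'.1 hlt
        rw [this.1 h (Icc_succ_mem hh).1, this.2 h hh]
      · obtain rfl : j = k := by omega
        rw [e1, e2]
    simp only [hgdef]
    rw [eW, hdep _ _ h hh k hk e0]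
  · intro k ω t; exact M.P_nonneg _ _ _ _
  · intro k ω; exact M.P_sum_one _ _ _
  · intro k hk ω
    by_cases hv : visA (alg ω) h s a k
    · rw [hpv k ω hv]
      have e : ∀ t, M.P h s a t * g k ω t = (lam * Wt ρ (visA (alg ω) h s a) N k) *
          (M.P h s a t * F (alg ω) h k t - M.P h s a t * ∑ u, M.P h s a u * F (alg ω) h k u) :=
        fun t => by simp only [hgdef]; ring
      simp_rw [e]
      rw [← Finset.mul_sum, Finset.sum_sub_distrib, ← Finset.sum_mul, M.P_sum_one]
      ring
    · simp [hgdef, hW0 k ω hv]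
  · intro k hk ω t
    have w := Wt_bounds (vis := visA (alg ω) h s a) hρ hN (Finset.mem_Icc.1 hk).1
    have hd : |F (alg ω) h k t - ∑ u, M.P h s a u * F (alg ω) h k u| ≤ 2 * B := by
      have h1 := abs_le.1 (hF (alg ω) h k t)
      have h2 := abs_le.1 (P_abs (M := M) h s a _ B (hF (alg ω) h k))
      rw [abs_le]; constructor <;> linarith
    simp only [hgdef]
    rw [abs_mul, abs_of_nonneg (mul_nonneg hlam0.le w.1)]
    calc lam * Wt ρ (visA (alg ω) h s a) N k * _ ≤ lam * ρ N * (2 * B) :=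
          mul_le_mul (mul_le_mul_of_nonneg_left w.2 hlam0.le) hd (abs_nonneg _) (by positivity)
      _ = 1 / (i + 1) := by rw [hlam]; field_simp
      _ ≤ 1 := by
          rw [div_le_one (by positivity)]
          have : (0 : ℝ) ≤ i := by positivity
          linarith
  · intro k hk t
    exact htr.2.2 k hk h hh t

lemma conc_family [IsProbabilityMeasure μ]
    (htr : IsMDPTrajectory μ M K 𝓕 (fun k h ω => (alg ω).st k h) (fun k h ω => (alg ω).ac k h))
    {ρ : ℕ → ℝ} (hρ : IsRate ρ) (F : QLAlg M K cb δ → ℕ → ℕ → S → ℝ) {B : ℝ} (hB : 0 < B)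
    (hF : ∀ x h k s, |F x h k s| ≤ B)
    (hdep : ∀ x y, ∀ h ∈ Icc 1 M.H, ∀ k ∈ Icc 1 K, HistEq x y k → F x h k = F y h k)
    (L : ℝ) (hL : 1 ≤ L) :
    ∃ Bad : Set Ω, μ.real Bad ≤ (M.H * (Fintype.card S * (Fintype.card A * (K * (K + 1)))))
        * Real.exp (-L) ∧
      ∀ ω, ω ∉ Bad → Conc (alg ω) ρ (F (alg ω)) B L := by
  classical
  let I : Finset (ℕ × S × A × ℕ × ℕ) :=
    Icc 1 M.H ×ˢ (univ : Finset S) ×ˢ (univ : Finset A) ×ˢ Icc 1 K ×ˢ range (K + 1)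
  let E : ℕ × S × A × ℕ × ℕ → Set Ω := fun q => {ω | L ≤ ∑ j ∈ Icc 1 K,
      ((1 / (2 * B * ρ q.2.2.2.1 * ((q.2.2.2.2 : ℕ) + 1)) *
          Wt ρ (visA (alg ω) q.1 q.2.1 q.2.2.1) q.2.2.2.1 j) *
          (F (alg ω) q.1 j ((alg ω).st j (q.1 + 1))
            - ∑ t, M.P q.1 q.2.1 q.2.2.1 t * F (alg ω) q.1 j t)
        - (1 / (2 * B * ρ q.2.2.2.1 * ((q.2.2.2.2 : ℕ) + 1)) *
          Wt ρ (visA (alg ω) q.1 q.2.1 q.2.2.1) q.2.2.2.1 j) ^ 2 *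
          M.varP q.1 q.2.1 q.2.2.1 (F (alg ω) q.1 j))}
  refine ⟨⋃ q ∈ I, E q, ?_, ?_⟩
  · refine (measureReal_biUnion_finset_le I E).trans ?_
    have : ∀ q ∈ I, μ.real (E q) ≤ Real.exp (-L) := by
      rintro ⟨h, s, a, N, i⟩ hq
      simp only [I, Finset.mem_product] at hq
      exact conc_single htr hρ F hB hF hdep L h hq.1 s a N
        (Finset.mem_Icc.1 hq.2.2.2.1).1 i
    refine (Finset.sum_le_sum this).trans ?_
    rw [Finset.sum_const, nsmul_eq_mul]
    simp [I, Finset.card_product]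
  · intro ω hω h hh s a k hk hc
    refine freedman_det hρ K _ _ B L hB hL (fun j _ _ => varP_nonneg h s a _)
      (fun j _ _ => varP_le h s a _ B (hF _ _ _)) ?_ k hk hc
    intro N hN i hi
    by_contra hcon
    apply hω
    simp only [Set.mem_iUnion]
    exact ⟨(h, s, a, N, i), by simp only [I, Finset.mem_product]; exact ⟨hh, mem_univ _, mem_univ _, hN, hi⟩,
      not_lt.1 hcon⟩

end

/-! ### Numerical lemmas -/

lemma hoeff_num (D R a B z : ℝ) (hB : 0 < B) (hz : 0 ≤ z) (hR0 : 0 ≤ R) (hR : R ≤ 12 * z ^ 2)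
    (ha : a ≤ B ^ 2) (h1 : D ≤ 2 * Real.sqrt (R * a) + 2 * B * R) (h2 : D ≤ 2 * B) :
    D ≤ 32 * B * z := by
  rcases le_total z 1 with hz1 | hz1
  · have e : Real.sqrt (R * a) ≤ 4 * z * B := by
      apply Real.sqrt_le_iff.2
      refine ⟨by positivity, ?_⟩
      have := mul_le_mul_of_nonneg_left ha hR0
      have h3 := mul_le_mul_of_nonneg_right hR (sq_nonneg B)
      nlinarith [mul_nonneg (sq_nonneg z) (sq_nonneg B)]
    have h4 : z ^ 2 ≤ z := by nlinarith
    have h5 : 2 * B * R ≤ 24 * (B * z) := by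
      have : B * R ≤ B * (12 * z) := mul_le_mul_of_nonneg_left (by linarith) hB.le
      linarith
    linarith
  · nlinarith

lemma bern_num (D r L io a e H N z u : ℝ) (hH : 1 ≤ H) (hN : 1 ≤ N) (hio : 1 / 4 ≤ io)
    (hL : L = 6 * io) (hr0 : 0 ≤ r) (hr : r * N ≤ 2 * H) (hz : 0 ≤ z) (hz2 : z ^ 2 * N = H * io)
    (hu : 0 < u) (huN : u ≤ N) (hu4 : u ^ 4 = N ^ 3) (he : 0 ≤ e)
    (ha : a ≤ e + 96 * H ^ 2 * z) (h1 : D ≤ 2 * Real.sqrt (r * L * a) + 2 * H * r * L) :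
    D ≤ 5 * Real.sqrt (r * io * e) + 120 * (H ^ 2 * io / u) := by
  have hN0 : 0 < N := by linarith
  have hio0 : 0 < io := by linarith
  have hH0 : 0 < H := by linarith
  have hri : r * io ≤ 2 * z ^ 2 := by
    have : r * io * N ≤ 2 * z ^ 2 * N := by nlinarith
    exact le_of_mul_le_mul_right this hN0
  have hri0 : 0 ≤ r * io := by positivity
  set g := H * io / u with hg
  have hg0 : 0 < g := by positivity
  have hgu : g * u = H * io := by rw [hg]; field_simp
  -- z ^ 3 ≤ 2 g ^ 2
  have hz3 : z ^ 3 ≤ 2 * g ^ 2 := by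
    have hHi : 1 / 4 ≤ H * io := by nlinarith
    have e1 : (z ^ 3) ^ 2 * u ^ 4 ≤ (2 * g ^ 2) ^ 2 * u ^ 4 := by
      have a1 : (z ^ 3) ^ 2 * u ^ 4 = (H * io) ^ 3 := by rw [hu4, ← hz2]; ring
      have a2 : (2 * g ^ 2) ^ 2 * u ^ 4 = 4 * (H * io) ^ 4 := by rw [← hgu]; ring
      rw [a1, a2]
      have : 0 < (H * io) ^ 3 := by positivity
      nlinarith
    have e2 := le_of_mul_le_mul_right e1 (by positivity)
    exact le_of_sq_le_sq e2 (by positivity)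
  have s1 : Real.sqrt (r * L * a) ≤ Real.sqrt (6 * (r * io * e)) +
      Real.sqrt (6 * (r * io * (96 * H ^ 2 * z))) := by
    have hsq : ∀ x y : ℝ, 0 ≤ x → 0 ≤ y → Real.sqrt (x + y) ≤ Real.sqrt x + Real.sqrt y := by
      intro x y hx hy
      apply Real.sqrt_le_iff.2
      refine ⟨by positivity, ?_⟩
      have h1 := Real.sq_sqrt hx
      have h2 := Real.sq_sqrt hy
      have h3 := mul_nonneg (Real.sqrt_nonneg x) (Real.sqrt_nonneg y)
      nlinarith
    refine le_trans (Real.sqrt_le_sqrt ?_) (hsq _ _ ?_ ?_)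
    · rw [hL]
      have := mul_le_mul_of_nonneg_left ha hri0
      nlinarith
    · positivity
    · positivity
  have s2 : Real.sqrt (6 * (r * io * e)) ≤ (5 / 2) * Real.sqrt (r * io * e) := by
    rw [Real.sqrt_mul (by norm_num)]
    refine mul_le_mul_of_nonneg_right ?_ (Real.sqrt_nonneg _)
    rw [Real.sqrt_le_left (by norm_num)]; norm_num
  have s3 : Real.sqrt (6 * (r * io * (96 * H ^ 2 * z))) ≤ 48 * (H * g) := by
    apply Real.sqrt_le_iff.2
    refine ⟨by positivity, ?_⟩
    have b1 : r * io * (96 * H ^ 2 * z) ≤ 2 * z ^ 2 * (96 * H ^ 2 * z) :=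
      mul_le_mul_of_nonneg_right hri (by positivity)
    have b2 : H ^ 2 * z ^ 3 ≤ H ^ 2 * (2 * g ^ 2) := mul_le_mul_of_nonneg_left hz3 (by positivity)
    nlinarith
  have s4 : 2 * H * r * L ≤ 24 * (H * g) := by
    rw [hL]
    have c1 : z ^ 2 ≤ g := by
      have : z ^ 2 * N ≤ g * N := by
        rw [hz2, ← hgu]; exact mul_le_mul_of_nonneg_left huN hg0.le
      exact le_of_mul_le_mul_right this hN0
    have c2 : H * (r * io) ≤ H * (2 * g) := mul_le_mul_of_nonneg_left (by linarith) hH0.le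
    nlinarith
  have s5 : H ^ 2 * io / u = H * g := by rw [hg]; ring
  rw [s5]
  linarith

lemma u_facts (N : ℕ) (hN : 1 ≤ N) : 0 < (N : ℝ) ^ ((3 : ℝ) / 4) ∧ (N : ℝ) ^ ((3 : ℝ) / 4) ≤ N ∧
    ((N : ℝ) ^ ((3 : ℝ) / 4)) ^ 4 = (N : ℝ) ^ 3 := by
  have h1 : (1 : ℝ) ≤ N := by exact_mod_cast hN
  refine ⟨by positivity, ?_, ?_⟩
  · calc (N : ℝ) ^ ((3 : ℝ) / 4) ≤ (N : ℝ) ^ (1 : ℝ) :=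
        Real.rpow_le_rpow_of_exponent_le h1 (by norm_num)
      _ = N := Real.rpow_one _
  · rw [← Real.rpow_natCast, ← Real.rpow_mul (by positivity)]
    norm_num

lemma lr_le (H N : ℕ) (hH : 1 ≤ H) (hN : 1 ≤ N) : lr H N * N ≤ 2 * H := by
  unfold lr
  have h1 : (1 : ℝ) ≤ N := by exact_mod_cast hN
  have h2 : (1 : ℝ) ≤ H := by exact_mod_cast hH
  rw [div_mul_eq_mul_div, div_le_iff₀ (by positivity)]
  nlinarith

section
variable {ρ : ℕ → ℝ} {vis : ℕ → Prop}

lemma rec_eq (hρ : IsRate ρ) (K : ℕ) (X y : ℕ → ℝ)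
    (h1 : ∀ k ∈ Icc 1 K, vis k → X (k + 1) = (1 - ρ (cnt vis k)) * X k + ρ (cnt vis k) * y k)
    (h2 : ∀ k ∈ Icc 1 K, ¬ vis k → X (k + 1) = X k) (k : ℕ) (hk : k ≤ K)
    (h0 : X 1 = 0 ∨ 1 ≤ cnt vis k) : X (k + 1) = avg ρ vis y k := by
  induction k with
  | zero =>
    rcases h0 with h0 | h0
    · simpa [avg] using h0
    · simp [cnt] at h0
  | succ k ih =>
    have hm : k + 1 ∈ Icc 1 K := by simp; omega
    by_cases hv : vis (k + 1)
    · rw [avg_pos _ hv, h1 _ hm hv]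
      by_cases hc : 1 ≤ cnt vis k
      · rw [ih (by omega) (Or.inr hc)]
      · have : cnt vis (k + 1) = 1 := by rw [cnt_pos hv]; omega
        rw [this, hρ.one]; ring
    · rw [avg_neg _ hv, h2 _ hm hv]
      rw [cnt_neg hv] at h0
      exact ih (by omega) h0

/-- the empirical variance -/
noncomputable def emp (ρ : ℕ → ℝ) (vis : ℕ → Prop) (y : ℕ → ℝ) (k : ℕ) : ℝ :=
  avg ρ vis (fun j => (y j) ^ 2) k - (avg ρ vis y k) ^ 2

lemma emp_nonneg (hρ : IsRate ρ) (y : ℕ → ℝ) (k : ℕ) : 0 ≤ emp ρ vis y k :=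
  sub_nonneg.2 (avg_sq_le hρ y k)

lemma emp_step (y : ℕ → ℝ) (k : ℕ) (hv : vis (k + 1)) (hc : 1 ≤ cnt vis k) :
    (cnt vis k : ℝ) * emp (fun n => 1 / (n : ℝ)) vis y k ≤
      (cnt vis (k + 1) : ℝ) * emp (fun n => 1 / (n : ℝ)) vis y (k + 1) := by
  unfold emp
  rw [avg_pos _ hv, avg_pos _ hv, cnt_pos hv]
  have h1 : (1 : ℝ) ≤ cnt vis k := by exact_mod_cast hc
  set n : ℝ := (cnt vis k : ℝ)
  push_cast
  set m := avg (fun n => 1 / (n : ℝ)) vis y k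
  set q := avg (fun n => 1 / (n : ℝ)) vis (fun j => (y j) ^ 2) k
  set x := y (k + 1)
  have : (n + 1) * ((1 - 1 / (n + 1)) * q + 1 / (n + 1) * x ^ 2
      - ((1 - 1 / (n + 1)) * m + 1 / (n + 1) * x) ^ 2) - n * (q - m ^ 2)
      = n / (n + 1) * (x - m) ^ 2 := by
    field_simp; ring
  have h2 : 0 ≤ n / (n + 1) * (x - m) ^ 2 := by positivity
  linarith

lemma avg_emp (H : ℕ) (hH : 1 ≤ H) (y : ℕ → ℝ) (k : ℕ) :
    avg (lr H) vis (fun j => Real.sqrt (emp (fun n => 1 / (n : ℝ)) vis y j / cnt vis j)) k ≤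
      2 * Real.sqrt (emp (fun n => 1 / (n : ℝ)) vis y k / cnt vis k) := by
  induction k with
  | zero => simp [avg, cnt]
  | succ k ih =>
    by_cases hv : vis (k + 1)
    · rw [avg_pos _ hv]
      have hs := Real.sqrt_nonneg (emp (fun n => 1 / (n : ℝ)) vis y (k + 1) / cnt vis (k + 1))
      by_cases hc : 1 ≤ cnt vis k
      · have hst := emp_step y k hv hc
        rw [cnt_pos hv] at hst hs ⊢
        have h1 : (1 : ℝ) ≤ cnt vis k := by exact_mod_cast hc
        have h2 : (1 : ℝ) ≤ H := by exact_mod_cast hH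
        have hconv : ∀ (e n : ℝ), 0 < n → Real.sqrt (e / n) = Real.sqrt (n * e) / n := by
          intro e n hn
          rw [show e / n = (n * e) / n ^ 2 by field_simp, Real.sqrt_div' _ (by positivity),
            Real.sqrt_sq hn.le]
        push_cast at hst ⊢
        rw [hconv _ _ (by positivity)] at ih
        rw [hconv _ ((cnt vis k : ℝ) + 1) (by positivity)]
        have hmon := Real.sqrt_le_sqrt hst
        set n : ℝ := (cnt vis k : ℝ)
        set g := Real.sqrt ((n + 1) * emp (fun n => 1 / (n : ℝ)) vis y (k + 1))
        have hg0 : 0 ≤ g := Real.sqrt_nonneg _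
        have ih' : avg (lr H) vis (fun j => Real.sqrt (emp (fun n => 1 / (n : ℝ)) vis y j
            / cnt vis j)) k ≤ 2 * (g / n) := by
          refine ih.trans ?_
          gcongr
        have hl : lr H (cnt vis k + 1) = (H + 1) / (H + (n + 1)) := by
          unfold lr; push_cast; rfl
        rw [hl]
        have e1 : (1 - ((H : ℝ) + 1) / (H + (n + 1))) = n / (H + (n + 1)) := by
          field_simp; ring
        rw [e1]
        have e2 := mul_le_mul_of_nonneg_left ih' (show 0 ≤ n / (H + (n + 1)) by positivity)
        have e3 : n / (H + (n + 1)) * (2 * (g / n)) + (H + 1) / (H + (n + 1)) * (g / (n + 1))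
            ≤ 2 * (g / (n + 1)) := by
          have : 2 * (g / (n + 1)) - (n / (H + (n + 1)) * (2 * (g / n))
              + (H + 1) / (H + (n + 1)) * (g / (n + 1)))
              = g * (H - 1) / ((n + 1) * (H + (n + 1))) := by
            field_simp; ring
          have h3 : 0 ≤ g * ((H : ℝ) - 1) / ((n + 1) * (H + (n + 1))) :=
            div_nonneg (mul_nonneg hg0 (by linarith)) (by positivity)
          linarith
        linarith
      · have : cnt vis (k + 1) = 1 := by rw [cnt_pos hv]; omega
        rw [this] at hs ⊢
        rw [(isRate_lr H hH).one]
        linarith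
    · rw [avg_neg _ hv, cnt_neg hv]
      have : emp (fun n => 1 / (n : ℝ)) vis y (k + 1) = emp (fun n => 1 / (n : ℝ)) vis y k := by
        unfold emp; rw [avg_neg _ hv, avg_neg _ hv]
      rw [this]; exact ih

end

section
variable {S A : Type} [Fintype S] [Fintype A] [Nonempty S] [Nonempty A]
    [DecidableEq S] [DecidableEq A] {M : MDP S A} {K : ℕ} {cb δ : ℝ}

lemma P_neg (h : ℕ) (s : S) (a : A) (f : S → ℝ) :
    ∑ t, M.P h s a t * (-f t) = -∑ t, M.P h s a t * f t := by
  simp [Finset.sum_neg_distrib]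

/-- Hoeffding-type consequence of the concentration bound. -/
lemma hoeff (x : QLAlg M K cb δ) {ρ : ℕ → ℝ} (hρ : IsRate ρ)
    (hρ2 : ∀ n : ℕ, 1 ≤ n → ρ n * n ≤ 2 * M.H) {f : ℕ → ℕ → S → ℝ} {B : ℝ} (hB : 0 < B)
    (hf : ∀ h j s, |f h j s| ≤ B) {io : ℝ} (hio : 1 / 4 ≤ io) (hC : Conc x ρ f B (6 * io))
    {h : ℕ} (hh : h ∈ Icc 1 M.H) (s : S) (a : A) {k : ℕ} (hk : k ∈ Icc 1 K)
    (hc : 1 ≤ cnt (visA x h s a) k) :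
    avg ρ (visA x h s a) (fun j => f h j (x.st j (h + 1)) - ∑ t, M.P h s a t * f h j t) k ≤
      32 * B * Real.sqrt (M.H * io / cnt (visA x h s a) k) := by
  have h1 := hC h hh s a k hk hc
  set v := visA x h s a
  have hN : (1 : ℝ) ≤ cnt v k := by exact_mod_cast hc
  have hio0 : 0 < io := by linarith
  have hH : (0 : ℝ) ≤ M.H := by positivity
  have hpos := hρ.pos _ hc
  refine hoeff_num _ (ρ (cnt v k) * (6 * io)) (avg ρ v (fun j => M.varP h s a (f h j)) k) B _ hB
    (Real.sqrt_nonneg _) (by positivity) ?_ ?_ ?_ ?_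
  · rw [Real.sq_sqrt (by positivity)]
    have := hρ2 _ hc
    rw [← mul_div_assoc, le_div_iff₀ (by linarith)]
    nlinarith
  · calc _ ≤ avg ρ v (fun _ => B ^ 2) k :=
        avg_mono hρ fun j _ _ => varP_le h s a _ B (hf h j)
      _ = B ^ 2 := avg_const hρ _ k hc
  · linarith
  · calc _ ≤ avg ρ v (fun _ => 2 * B) k := avg_mono hρ fun j _ _ => by
          have e1 := abs_le.1 (hf h j (x.st j (h + 1)))
          have e2 := abs_le.1 (P_abs (M := M) h s a (f h j) B (hf h j))
          linarith [e1.2, e2.1]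
      _ = 2 * B := avg_const hρ _ k hc

/-- Empirical-Bernstein consequence of the concentration bounds. -/
lemma bern (x : QLAlg M K cb δ) {ρ : ℕ → ℝ} (hρ : IsRate ρ)
    (hρ2 : ∀ n : ℕ, 1 ≤ n → ρ n * n ≤ 2 * M.H) {f : ℕ → ℕ → S → ℝ}
    (hf : ∀ h j s, |f h j s| ≤ M.H) {io : ℝ} (hio : 1 / 4 ≤ io)
    (hC1 : Conc x ρ f M.H (6 * io)) (hC2 : Conc x ρ (fun h j s => - f h j s) M.H (6 * io))
    (hC3 : Conc x ρ (fun h j s => - (f h j s) ^ 2) ((M.H : ℝ) ^ 2) (6 * io))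
    {h : ℕ} (hh : h ∈ Icc 1 M.H) (s : S) (a : A) {k : ℕ} (hk : k ∈ Icc 1 K)
    (hc : 1 ≤ cnt (visA x h s a) k) :
    avg ρ (visA x h s a) (fun j => (∑ t, M.P h s a t * f h j t) - f h j (x.st j (h + 1))) k ≤
      5 * Real.sqrt (ρ (cnt (visA x h s a) k) * io *
        emp ρ (visA x h s a) (fun j => f h j (x.st j (h + 1))) k)
      + 120 * ((M.H : ℝ) ^ 2 * io / (cnt (visA x h s a) k : ℝ) ^ ((3 : ℝ) / 4)) := by
  have hH1 : (1 : ℝ) ≤ M.H := by exact_mod_cast M.H_pos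
  have g1 := hoeff x hρ hρ2 (by positivity) hf hio hC1 hh s a hk hc
  have g2 := hoeff x hρ hρ2 (by positivity) (fun h j s => by rw [abs_neg]; exact hf h j s) hio hC2
    hh s a hk hc
  have g3 := hoeff x hρ hρ2 (by positivity) (fun h j s => by
    rw [abs_neg, abs_pow]; exact pow_le_pow_left₀ (abs_nonneg _) (hf h j s) 2) hio hC3
    hh s a hk hc
  have g0 := hC2 h hh s a k hk hc
  set v := visA x h s a
  simp only [P_neg] at g0 g2 g3
  have hN : (1 : ℝ) ≤ cnt v k := by exact_mod_cast hc
  have hio0 : 0 < io := by linarith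
  obtain ⟨hu, huN, hu4⟩ := u_facts _ hc
  have hpos := hρ.pos _ hc
  set z := Real.sqrt (M.H * io / cnt v k) with hzdef
  have hz : 0 ≤ z := Real.sqrt_nonneg _
  set p := avg ρ v (fun j => ∑ t, M.P h s a t * f h j t) k with hp
  set q := avg ρ v (fun j => f h j (x.st j (h + 1))) k with hq
  have g1' : q - p ≤ 32 * M.H * z := by rw [hp, hq, ← avg_sub]; exact g1
  have g2' : p - q ≤ 32 * M.H * z := by
    rw [hp, hq, ← avg_sub]
    refine le_trans (le_of_eq (avg_congr fun j _ _ => by ring)) g2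
  have g3' : avg ρ v (fun j => ∑ t, M.P h s a t * (f h j t) ^ 2) k
      - avg ρ v (fun j => (f h j (x.st j (h + 1))) ^ 2) k ≤ 32 * (M.H : ℝ) ^ 2 * z := by
    rw [← avg_sub]
    refine le_trans (le_of_eq (avg_congr fun j _ _ => by ring)) g3
  have g0' : avg ρ v (fun j => (∑ t, M.P h s a t * f h j t) - f h j (x.st j (h + 1))) k ≤
      2 * Real.sqrt (ρ (cnt v k) * (6 * io) * avg ρ v (fun j => M.varP h s a (f h j)) k)
      + 2 * M.H * ρ (cnt v k) * (6 * io) := by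
    refine le_trans (le_of_eq (avg_congr fun j _ _ => by ring)) (g0.trans (le_of_eq ?_))
    congr 5
    funext j
    unfold MDP.varP
    simp only [P_neg, neg_sq]
  have hpH : |p| ≤ M.H := avg_abs_le hρ hc fun j _ _ => P_abs h s a _ _ (hf h j)
  have hqH : |q| ≤ M.H := avg_abs_le hρ hc fun j _ _ => hf h j _
  refine bern_num _ (ρ (cnt v k)) (6 * io) io (avg ρ v (fun j => M.varP h s a (f h j)) k) _ M.H
    (cnt v k) z _ hH1 hN hio rfl hpos.le (hρ2 _ hc) hz ?_ hu huN hu4 (emp_nonneg hρ _ _) ?_ g0'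
  · rw [hzdef, Real.sq_sqrt (by positivity)]; field_simp
  · have e1 : avg ρ v (fun j => M.varP h s a (f h j)) k
        = avg ρ v (fun j => ∑ t, M.P h s a t * (f h j t) ^ 2) k
          - avg ρ v (fun j => (∑ t, M.P h s a t * f h j t) ^ 2) k := avg_sub _ _ k
    have e2 := avg_sq_le (vis := v) hρ (fun j => ∑ t, M.P h s a t * f h j t) k
    rw [← hp] at e2
    rw [e1]; unfold emp; rw [← hq]
    have e3 : q ^ 2 - p ^ 2 ≤ 64 * (M.H : ℝ) ^ 2 * z := by
      have hb1 : |q - p| ≤ 32 * M.H * z := abs_le.2 ⟨by linarith, by linarith⟩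
      have hb2 : |q + p| ≤ 2 * M.H := (abs_add_le _ _).trans (by linarith)
      have : |q - p| * |q + p| ≤ 32 * M.H * z * (2 * M.H) :=
        mul_le_mul hb1 hb2 (abs_nonneg _) (by positivity)
      rw [← abs_mul] at this
      have := (le_abs_self _).trans this
      nlinarith
    linarith

/-! ### Basic facts about the optimal values -/

lemma QstarAux_bounds (M : MDP S A) (n h : ℕ) (s : S) (a : A) :
    0 ≤ M.QstarAux n h s a ∧ M.QstarAux n h s a ≤ n := by
  induction n generalizing h s a with
  | zero => simp [MDP.QstarAux]
  | succ n ih =>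
    have hb : ∀ t, 0 ≤ (univ.sup' univ_nonempty fun a' => M.QstarAux n (h + 1) t a') ∧
        (univ.sup' univ_nonempty fun a' => M.QstarAux n (h + 1) t a') ≤ (n : ℝ) := fun t =>
      ⟨(ih (h + 1) t (Classical.arbitrary A)).1.trans
        (Finset.le_sup' (fun a' => M.QstarAux n (h + 1) t a') (Finset.mem_univ _)),
      Finset.sup'_le _ _ fun a' _ => (ih (h + 1) t a').2⟩
    have h1 := M.r_nonneg h s a
    have h2 := M.r_le_one h s a
    have h3 : 0 ≤ ∑ t, M.P h s a t *
        (univ.sup' univ_nonempty fun a' => M.QstarAux n (h + 1) t a') :=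
      Finset.sum_nonneg fun t _ => mul_nonneg (M.P_nonneg h s a t) (hb t).1
    have h4 := P_le (M := M) h s a
      (fun t => univ.sup' univ_nonempty fun a' => M.QstarAux n (h + 1) t a') n fun t => (hb t).2
    simp only [MDP.QstarAux]
    push_cast
    constructor <;> linarith

lemma Qstar_bounds (M : MDP S A) {h : ℕ} (hh : 1 ≤ h) (s : S) (a : A) :
    0 ≤ M.Qstar h s a ∧ M.Qstar h s a ≤ M.H := by
  have := QstarAux_bounds M (M.H + 1 - h) h s a
  refine ⟨this.1, this.2.trans ?_⟩
  have : M.H + 1 - h ≤ M.H := by omega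
  exact_mod_cast this

lemma Vstar_bounds (M : MDP S A) {h : ℕ} (hh : 1 ≤ h) (s : S) :
    0 ≤ M.Vstar h s ∧ M.Vstar h s ≤ M.H :=
  ⟨(Qstar_bounds M hh s (Classical.arbitrary A)).1.trans
    (Finset.le_sup' (fun a => M.Qstar h s a) (Finset.mem_univ _)),
   Finset.sup'_le _ _ fun a _ => (Qstar_bounds M hh s a).2⟩

lemma Vstar_terminal (M : MDP S A) (s : S) : M.Vstar (M.H + 1) s = 0 := by
  unfold MDP.Vstar MDP.Qstar
  simp [MDP.QstarAux]

lemma Qstar_bellman (M : MDP S A) {h : ℕ} (hh : h ∈ Icc 1 M.H) (s : S) (a : A) :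
    M.Qstar h s a = M.r h s a + ∑ t, M.P h s a t * M.Vstar (h + 1) t := by
  have h1 := Finset.mem_Icc.1 hh
  unfold MDP.Vstar MDP.Qstar
  obtain ⟨n, hn⟩ : ∃ n, M.H + 1 - h = n + 1 := ⟨M.H - h, by omega⟩
  rw [hn, show M.H + 1 - (h + 1) = n by omega]
  rfl

/-! ### Monotonicity of the iterates -/

lemma cnt_eq_N (x : QLAlg M K cb δ) {h : ℕ} (hh : h ∈ Icc 1 M.H) (s : S) (a : A) {k : ℕ}
    (hk : k ≤ K) : cnt (visA x h s a) k = x.N k h s a := by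
  induction k with
  | zero => rw [x.N_init]; rfl
  | succ k ih =>
    rw [x.N_upd (k + 1) (by simp; omega) h hh s a, Nat.add_sub_cancel, ← ih (by omega)]
    by_cases hv : visA x h s a (k + 1)
    · have hv' : s = x.st (k + 1) h ∧ a = x.ac (k + 1) h := hv
      rw [cnt_pos hv, if_pos hv']
    · have hv' : ¬ (s = x.st (k + 1) h ∧ a = x.ac (k + 1) h) := hv
      rw [cnt_neg hv, if_neg hv', add_zero]

lemma Q_anti (x : QLAlg M K cb δ) {h : ℕ} (hh : h ∈ Icc 1 M.H) (s : S) (a : A) {k : ℕ}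
    (hk : k ∈ Icc 1 K) : x.Q (k + 1) h s a ≤ x.Q k h s a := by
  rw [x.Q_upd k hk h hh]
  split_ifs
  · exact (min_le_right _ _).trans (min_le_right _ _)
  · exact le_rfl

lemma V_eq_sup (x : QLAlg M K cb δ) {h : ℕ} (hh : h ∈ Icc 1 M.H) (s : S) {k : ℕ} (hk : k ≤ K) :
    x.V (k + 1) h s = univ.sup' univ_nonempty (fun a => x.Q (k + 1) h s a) := by
  induction k with
  | zero =>
    rw [x.V_init h hh]
    simp only [zero_add, x.Q_init h hh]
    rw [Finset.sup'_const]
  | succ k ih =>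
    have hm : k + 1 ∈ Icc 1 K := by simp; omega
    rw [x.V_upd (k + 1) hm h hh]
    split_ifs with hs
    · rfl
    · rw [ih (by omega)]
      refine Finset.sup'_congr _ rfl fun a _ => ?_
      rw [x.Q_upd (k + 1) hm h hh, if_neg fun h' => hs h'.1]

lemma V_anti (x : QLAlg M K cb δ) {h : ℕ} (hh : h ∈ Icc 1 M.H) (s : S) {k : ℕ}
    (hk : k ∈ Icc 1 K) : x.V (k + 1) h s ≤ x.V k h s := by
  obtain ⟨j, rfl⟩ : ∃ j, k = j + 1 := ⟨k - 1, by have := Finset.mem_Icc.1 hk; omega⟩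
  have hk' := Finset.mem_Icc.1 hk
  rw [V_eq_sup x hh s hk'.2, V_eq_sup x hh s (by omega)]
  refine Finset.sup'_le _ _ fun a _ => (Q_anti x hh s a hk).trans ?_
  exact Finset.le_sup' (fun a => x.Q (j + 1) h s a) (Finset.mem_univ a)

lemma VR_facts (x : QLAlg M K cb δ) {h : ℕ} (hh : h ∈ Icc 1 M.H) (s : S) {k : ℕ} (hk : k ≤ K) :
    x.V (k + 1) h s ≤ x.VR (k + 1) h s ∧ x.VR (k + 1) h s ≤ M.H ∧
      (1 ≤ k → x.VR (k + 1) h s ≤ x.VR k h s) := by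
  induction k with
  | zero => rw [x.V_init h hh, x.VR_init h hh]; simp
  | succ k ih =>
    have hm : k + 1 ∈ Icc 1 K := by simp; omega
    obtain ⟨i1, i2, -⟩ := ih (by omega)
    have hV := V_anti x hh s hm
    by_cases hs : s = x.st (k + 1) h
    · subst hs
      by_cases hu : (1 < x.V (k + 1 + 1) h (x.st (k + 1) h) - x.VLCB (k + 1 + 1) h (x.st (k + 1) h)
          ∨ x.uref (k + 1) h (x.st (k + 1) h))
      · rw [x.VR_upd_pos (k + 1) hm h hh hu]
        exact ⟨le_rfl, by linarith, fun _ => by linarith⟩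
      · rw [x.VR_upd_neg (k + 1) hm h hh hu]
        exact ⟨by linarith, by linarith, fun _ => le_rfl⟩
    · rw [x.VR_upd_other (k + 1) hm h hh s hs]
      exact ⟨by linarith, by linarith, fun _ => le_rfl⟩

/-- same facts at all steps up to `H + 1`, in interval form -/
lemma V_le_VR (x : QLAlg M K cb δ) {h : ℕ} (hh : h ∈ Icc 1 (M.H + 1)) (s : S) {k : ℕ}
    (hk : k ∈ Icc 1 (K + 1)) : x.V k h s ≤ x.VR k h s ∧ x.VR k h s ≤ M.H := by
  rcases Icc_succ_cases hh with h' | rfl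
  · obtain ⟨j, rfl⟩ : ∃ j, k = j + 1 := ⟨k - 1, by have := Finset.mem_Icc.1 hk; omega⟩
    have := VR_facts x h' s (k := j) (by have := Finset.mem_Icc.1 hk; omega)
    exact ⟨this.1, this.2.1⟩
  · obtain ⟨e1, e2, -⟩ := x.V_terminal k s
    rw [e1, e2]; simp

lemma VR_anti (x : QLAlg M K cb δ) {h : ℕ} (hh : h ∈ Icc 1 (M.H + 1)) (s : S) {i j : ℕ}
    (hi : 1 ≤ i) (hij : i ≤ j) (hj : j ≤ K + 1) : x.VR j h s ≤ x.VR i h s := by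
  rcases Icc_succ_cases hh with h' | rfl
  · induction j, hij using Nat.le_induction with
    | base => exact le_rfl
    | succ j hij ih =>
      exact ((VR_facts x h' s (k := j) (by omega)).2.2 (by omega)).trans (ih (by omega))
  · rw [(x.V_terminal j s).2.1, (x.V_terminal i s).2.1]

end

section
variable {S A : Type} [Fintype S] [Fintype A] [Nonempty S] [Nonempty A]
    [DecidableEq S] [DecidableEq A] {M : MDP S A} {K : ℕ} {cb δ : ℝ}

lemma rec_vis (x : QLAlg M K cb δ) {ρ : ℕ → ℝ} (hρ : IsRate ρ) {h : ℕ} (hh : h ∈ Icc 1 M.H)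
    (s : S) (a : A) (X y : ℕ → ℝ)
    (hX : ∀ k ∈ Icc 1 K, X (k + 1) = if s = x.st k h ∧ a = x.ac k h then
      (1 - ρ (x.N k h s a)) * X k + ρ (x.N k h s a) * y k else X k)
    {k : ℕ} (hk : k ≤ K) (h0 : X 1 = 0 ∨ 1 ≤ cnt (visA x h s a) k) :
    X (k + 1) = avg ρ (visA x h s a) y k := by
  refine rec_eq hρ K X y ?_ ?_ k hk h0
  · intro j hj hv
    have hv' : s = x.st j h ∧ a = x.ac j h := hv
    rw [hX j hj, if_pos hv', cnt_eq_N x hh s a (Finset.mem_Icc.1 hj).2]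
  · intro j hj hv
    have hv' : ¬ (s = x.st j h ∧ a = x.ac j h) := hv
    rw [hX j hj, if_neg hv']

lemma emp_congr {ρ : ℕ → ℝ} {v : ℕ → Prop} {y z : ℕ → ℝ} {k : ℕ}
    (h : ∀ j ∈ Icc 1 k, v j → y j = z j) : emp ρ v y k = emp ρ v z k := by
  unfold emp
  rw [avg_congr h, avg_congr fun j hj hv => by rw [h j hj hv]]

/-- truncation to `[0, H]` -/
noncomputable def clip (H : ℕ) (z : ℝ) : ℝ := max 0 (min z H)

lemma clip_bounds (H : ℕ) (z : ℝ) : 0 ≤ clip H z ∧ clip H z ≤ H :=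
  ⟨le_max_left _ _, max_le (by positivity) (min_le_right _ _)⟩

lemma clip_eq {H : ℕ} {z : ℝ} (h0 : 0 ≤ z) (h1 : z ≤ H) : clip H z = z := by
  unfold clip; rw [min_eq_left h1, max_eq_right h0]

noncomputable def fStar (_ : QLAlg M K cb δ) (h _k : ℕ) (s : S) : ℝ := - M.Vstar (h + 1) s
noncomputable def fRef (x : QLAlg M K cb δ) (h k : ℕ) (s : S) : ℝ := clip M.H (x.VR k (h + 1) s)
noncomputable def fAdv (x : QLAlg M K cb δ) (h k : ℕ) (s : S) : ℝ :=
  clip M.H (x.V k (h + 1) s) - clip M.H (x.VR k (h + 1) s)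

lemma fStar_abs (x : QLAlg M K cb δ) (h k : ℕ) (s : S) : |fStar x h k s| ≤ M.H := by
  unfold fStar
  have := Vstar_bounds M (h := h + 1) (by omega) s
  rw [abs_neg, abs_of_nonneg this.1]; exact this.2

lemma fRef_abs (x : QLAlg M K cb δ) (h k : ℕ) (s : S) : |fRef x h k s| ≤ M.H := by
  unfold fRef
  have := clip_bounds M.H (x.VR k (h + 1) s)
  rw [abs_of_nonneg this.1]; exact this.2

lemma fAdv_abs (x : QLAlg M K cb δ) (h k : ℕ) (s : S) : |fAdv x h k s| ≤ M.H := by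
  unfold fAdv
  have h1 := clip_bounds M.H (x.VR k (h + 1) s)
  have h2 := clip_bounds M.H (x.V k (h + 1) s)
  rw [abs_le]; constructor <;> linarith [h1.1, h1.2, h2.1, h2.2]

/-- the good event -/
structure Good (x : QLAlg M K cb δ) (L : ℝ) : Prop where
  star : Conc x (lr M.H) (fStar x) M.H L
  adv1 : Conc x (lr M.H) (fAdv x) M.H L
  adv2 : Conc x (lr M.H) (fun h j s => - fAdv x h j s) M.H L
  adv3 : Conc x (lr M.H) (fun h j s => - (fAdv x h j s) ^ 2) ((M.H : ℝ) ^ 2) L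
  ref1 : Conc x (fun n => 1 / (n : ℝ)) (fRef x) M.H L
  ref2 : Conc x (fun n => 1 / (n : ℝ)) (fun h j s => - fRef x h j s) M.H L
  ref3 : Conc x (fun n => 1 / (n : ℝ)) (fun h j s => - (fRef x h j s) ^ 2) ((M.H : ℝ) ^ 2) L

lemma ucb_step (x : QLAlg M K cb δ) (hio : 1 / 4 ≤ iota S A K M.H δ) (hcb : 320 ≤ cb)
    (G : Good x (6 * iota S A K M.H δ)) {k : ℕ} (hk : k ∈ Icc 1 K)
    (hV : ∀ j ∈ Icc 1 k, ∀ h ∈ Icc 1 (M.H + 1), ∀ s, M.Vstar h s ≤ x.V j h s)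
    {h : ℕ} (hh : h ∈ Icc 1 M.H) (s : S) (a : A) (hv : visA x h s a k) :
    M.Qstar h s a ≤ x.QUCB (k + 1) h s a := by
  have hk' := Finset.mem_Icc.1 hk
  have hlr := isRate_lr M.H M.H_pos
  have hc : 1 ≤ cnt (visA x h s a) k := cnt_ge_one hk'.1 hv
  have hh1 := (Icc_succ_mem hh).2
  have hg := hoeff x hlr (fun n hn => lr_le M.H n M.H_pos hn)
    (by have := M.H_pos; positivity) (fStar_abs x) hio G.star hh s a hk hc
  set io := iota S A K M.H δ with hiodef
  have hio0 : 0 < io := by linarith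
  have hrec := rec_vis x hlr hh s a (fun k => x.QUCB k h s a)
    (fun j => M.r h s a + x.V j (h + 1) (x.st j (h + 1))
              + cb * Real.sqrt ((M.H : ℝ) ^ 3 * io / (x.N j h s a)))
    (fun j hj => x.QUCB_upd j hj h hh s a) hk'.2 (Or.inr hc)
  set v := visA x h s a with hvdef
  set z := Real.sqrt (M.H * io / cnt v k) with hz
  rw [hrec]
  have hlow : avg (lr M.H) v (fun j => (M.Qstar h s a + cb * (M.H * z)) -
      (fStar x h j (x.st j (h + 1)) - ∑ t, M.P h s a t * fStar x h j t)) k ≤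
      avg (lr M.H) v (fun j => M.r h s a + x.V j (h + 1) (x.st j (h + 1))
              + cb * Real.sqrt ((M.H : ℝ) ^ 3 * io / (x.N j h s a))) k := by
    refine avg_mono hlr fun j hj hvj => ?_
    have hj' := Finset.mem_Icc.1 hj
    have e1 := hV j hj (h + 1) hh1 (x.st j (h + 1))
    have e2 : (M.H : ℝ) * z ≤ Real.sqrt ((M.H : ℝ) ^ 3 * io / (x.N j h s a)) := by
      rw [← cnt_eq_N x hh s a (by omega : j ≤ K)]
      have hcj : (1 : ℝ) ≤ cnt v j := by exact_mod_cast cnt_ge_one hj'.1 hvj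
      have hmon : (cnt v j : ℝ) ≤ cnt v k := by exact_mod_cast cnt_mono hj'.2
      apply Real.le_sqrt_of_sq_le
      rw [mul_pow, hz, Real.sq_sqrt (by positivity)]
      rw [show (M.H : ℝ) ^ 2 * (M.H * io / cnt v k) = (M.H : ℝ) ^ 3 * io / cnt v k by ring]
      gcongr
    have e3 := mul_le_mul_of_nonneg_left e2 (by linarith : 0 ≤ cb)
    rw [Qstar_bellman M hh s a]
    unfold fStar
    rw [P_neg]
    linarith
  refine le_trans ?_ hlow
  rw [avg_sub, avg_const hlr _ k hc]
  have hH0 : (0 : ℝ) ≤ M.H * z := by positivity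
  nlinarith

lemma qr_step (x : QLAlg M K cb δ) (hio : 1 / 4 ≤ iota S A K M.H δ) (hcb : 320 ≤ cb)
    (G : Good x (6 * iota S A K M.H δ)) {k : ℕ} (hk : k ∈ Icc 1 K)
    (hV : ∀ j ∈ Icc 1 k, ∀ h ∈ Icc 1 (M.H + 1), ∀ s, M.Vstar h s ≤ x.V j h s)
    {h : ℕ} (hh : h ∈ Icc 1 M.H) (s : S) (a : A) (hv : visA x h s a k) :
    M.Qstar h s a ≤ x.QR (k + 1) h s a := by
  have hk' := Finset.mem_Icc.1 hk
  have hlr := isRate_lr M.H M.H_pos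
  have hc : 1 ≤ cnt (visA x h s a) k := cnt_ge_one hk'.1 hv
  have hh1 := (Icc_succ_mem hh).2
  have hH1 : (1 : ℝ) ≤ M.H := by exact_mod_cast M.H_pos
  have hinv2 : ∀ n : ℕ, 1 ≤ n → (1 / (n : ℝ)) * n ≤ 2 * M.H := by
    intro n hn
    have : (1 : ℝ) ≤ n := by exact_mod_cast hn
    rw [one_div, inv_mul_cancel₀ (by positivity)]; linarith
  have hbA := bern x hlr (fun n hn => lr_le M.H n M.H_pos hn) (fAdv_abs x) hio G.adv1 G.adv2 G.adv3
    hh s a hk hc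
  have hbR : ∀ j ∈ Icc 1 K, _ := fun j hj => bern x isRate_inv hinv2 (fRef_abs x) hio
    G.ref1 G.ref2 G.ref3 hh s a (k := j) hj
  -- clipping is inactive
  have hclip : ∀ j ∈ Icc 1 k, ∀ t, fRef x h j t = x.VR j (h + 1) t ∧
      fAdv x h j t = x.V j (h + 1) t - x.VR j (h + 1) t := by
    intro j hj t
    have hj' := Finset.mem_Icc.1 hj
    have e1 := hV j hj (h + 1) hh1 t
    have e2 := V_le_VR x hh1 t (k := j) (by simp; omega)
    have e3 := (Vstar_bounds M (h := h + 1) (by omega) t).1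
    unfold fRef fAdv
    rw [clip_eq (by linarith) e2.2, clip_eq (by linarith) (by linarith)]
    exact ⟨rfl, rfl⟩
  set io := iota S A K M.H δ with hiodef
  have hio0 : 0 < io := by linarith
  set v := visA x h s a with hvdef
  -- the running statistics
  have hmu : ∀ j ≤ K, x.muRef (j + 1) h s a = avg (fun n => 1 / (n : ℝ)) v
      (fun j => x.VR j (h + 1) (x.st j (h + 1))) j := fun j hj =>
    rec_vis x isRate_inv hh s a (fun k => x.muRef k h s a) _
      (fun j hj => x.muRef_upd j hj h hh s a) hj (Or.inl (x.mom_init h s a).1)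
  have hsig : x.sigRef (k + 1) h s a = avg (fun n => 1 / (n : ℝ)) v
      (fun j => (x.VR j (h + 1) (x.st j (h + 1))) ^ 2) k :=
    rec_vis x isRate_inv hh s a (fun k => x.sigRef k h s a) _
      (fun j hj => x.sigRef_upd j hj h hh s a) hk'.2 (Or.inl (x.mom_init h s a).2.1)
  have hmuA : x.muAdv (k + 1) h s a = avg (lr M.H) v
      (fun j => x.V j (h + 1) (x.st j (h + 1)) - x.VR j (h + 1) (x.st j (h + 1))) k :=
    rec_vis x hlr hh s a (fun k => x.muAdv k h s a) _
      (fun j hj => x.muAdv_upd j hj h hh s a) hk'.2 (Or.inl (x.mom_init h s a).2.2.1)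
  have hsigA : x.sigAdv (k + 1) h s a = avg (lr M.H) v
      (fun j => (x.V j (h + 1) (x.st j (h + 1)) - x.VR j (h + 1) (x.st j (h + 1))) ^ 2) k :=
    rec_vis x hlr hh s a (fun k => x.sigAdv k h s a) _
      (fun j hj => x.sigAdv_upd j hj h hh s a) hk'.2 (Or.inl (x.mom_init h s a).2.2.2.1)
  have hBRavg : x.BR (k + 1) h s a = avg (lr M.H) v
      (fun j => x.bR j h - cb * (M.H : ℝ) ^ 2 * io / (x.N j h s a : ℝ) ^ ((3 : ℝ) / 4)) k := by
    refine rec_vis x hlr hh s a (fun k => x.BR k h s a) _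
      (fun j hj => ?_) hk'.2 (Or.inl (x.mom_init h s a).2.2.2.2.1)
    split_ifs with hvj
    · have hcj : 1 ≤ x.N j h s a := by
        rw [← cnt_eq_N x hh s a (Finset.mem_Icc.1 hj).2]
        exact cnt_ge_one (Finset.mem_Icc.1 hj).1 hvj
      have hp := hlr.pos _ hcj
      have hd := x.dR_upd j hj h hh s a
      rw [if_pos hvj] at hd
      have hb := x.bR_def j hj h hh
      rw [← hvj.1, ← hvj.2, hd] at hb
      rw [hb]
      field_simp
      ring
    · have := x.BR_upd j hj h hh s a
      rw [if_neg hvj] at this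
      exact this
  have hBR := x.BR_upd k hk h hh s a
  rw [if_pos (show s = x.st k h ∧ a = x.ac k h from hv), ← cnt_eq_N x hh s a hk'.2] at hBR
  rw [hsig, hmu k hk'.2, hsigA, hmuA] at hBR
  have hrec := rec_vis x hlr hh s a (fun k => x.QR k h s a) _
    (fun j hj => x.QR_upd j hj h hh s a) hk'.2 (Or.inr hc)
  rw [hrec]
  set yR : ℕ → ℝ := fun j => x.VR j (h + 1) (x.st j (h + 1)) with hyR
  set yA : ℕ → ℝ := fun j => x.V j (h + 1) (x.st j (h + 1)) - x.VR j (h + 1) (x.st j (h + 1))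
    with hyA
  set eR := emp (fun n => 1 / (n : ℝ)) v yR k with heR
  set eA := emp (lr M.H) v yA k with heA
  have heA0 : 0 ≤ eA := emp_nonneg hlr _ _
  have heR0 : 0 ≤ eR := emp_nonneg isRate_inv _ _
  set u : ℝ := (cnt v k : ℝ) ^ ((3 : ℝ) / 4) with hu
  obtain ⟨hu0, -, -⟩ := u_facts _ hc
  rw [← hu] at hu0
  set d : ℕ → ℝ := fun j => (∑ t, M.P h s a t * fAdv x h j t) - fAdv x h j (x.st j (h + 1))
    with hd
  set w : ℕ → ℝ := fun j => Real.sqrt (emp (fun n => 1 / (n : ℝ)) v yR j / cnt v j) with hw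
  set b : ℕ → ℝ := fun j => x.bR j h - cb * (M.H : ℝ) ^ 2 * io / (x.N j h s a : ℝ) ^ ((3 : ℝ) / 4)
    with hb
  have hlow : avg (lr M.H) v (fun j => ((M.Qstar h s a + (cb - 120) * ((M.H : ℝ) ^ 2 * io / u))
      - d j) - (5 * Real.sqrt io) * w j + b j) k ≤ avg (lr M.H) v (fun j => M.r h s a
        + x.V j (h + 1) (x.st j (h + 1)) - x.VR j (h + 1) (x.st j (h + 1))
        + x.muRef (j + 1) h s a + x.bR j h) k := by
    refine avg_mono hlr fun j hj hvj => ?_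
    have hj' := Finset.mem_Icc.1 hj
    have hjK : j ∈ Icc 1 K := by simp; omega
    have hcj : 1 ≤ cnt v j := cnt_ge_one hj'.1 hvj
    have hcj' : (1 : ℝ) ≤ cnt v j := by exact_mod_cast hcj
    have hmon : (cnt v j : ℝ) ≤ cnt v k := by exact_mod_cast cnt_mono hj'.2
    -- reference part
    have r1 := hbR j hjK hcj
    rw [avg_sub] at r1
    have r2 : avg (fun n => 1 / (n : ℝ)) v (fun i => fRef x h i (x.st i (h + 1))) j
        = x.muRef (j + 1) h s a := by
      rw [hmu j (by omega)]
      refine avg_congr fun i hi _ => ?_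
      have hi' := Finset.mem_Icc.1 hi
      exact (hclip i (by simp; omega) _).1
    have r3 : emp (fun n => 1 / (n : ℝ)) v (fun i => fRef x h i (x.st i (h + 1))) j
        = emp (fun n => 1 / (n : ℝ)) v yR j := by
      refine emp_congr fun i hi _ => ?_
      have hi' := Finset.mem_Icc.1 hi
      exact (hclip i (by simp; omega) _).1
    have r4 : ∑ t, M.P h s a t * x.VR j (h + 1) t ≤
        avg (fun n => 1 / (n : ℝ)) v (fun i => ∑ t, M.P h s a t * fRef x h i t) j := by
      calc _ = avg (fun n => 1 / (n : ℝ)) v (fun _ => ∑ t, M.P h s a t * x.VR j (h + 1) t) j :=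
            (avg_const isRate_inv _ j hcj).symm
        _ ≤ _ := avg_mono isRate_inv fun i hi _ => by
            have hi' := Finset.mem_Icc.1 hi
            refine P_mono h s a _ _ fun t => ?_
            rw [(hclip i (by simp; omega) t).1]
            exact VR_anti x hh1 t hi'.1 hi'.2 (by omega)
    rw [r2, r3] at r1
    have r5 : Real.sqrt (1 / (cnt v j : ℝ) * io * emp (fun n => 1 / (n : ℝ)) v yR j)
        = Real.sqrt io * w j := by
      rw [hw, ← Real.sqrt_mul hio0.le]
      congr 1; ring
    rw [r5] at r1
    -- bonus
    have c1 : (M.H : ℝ) ^ 2 * io / u ≤ (M.H : ℝ) ^ 2 * io / (cnt v j : ℝ) ^ ((3 : ℝ) / 4) := by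
      rw [hu]; gcongr
    have c2 : x.bR j h = b j + cb * ((M.H : ℝ) ^ 2 * io / (cnt v j : ℝ) ^ ((3 : ℝ) / 4)) := by
      rw [show cnt v j = x.N j h s a from cnt_eq_N x hh s a (by omega : j ≤ K), hb]
      ring
    have c3 := mul_le_mul_of_nonneg_left c1 (by linarith : 0 ≤ cb - 120)
    -- values
    have d1 : d j = (∑ t, M.P h s a t * x.V j (h + 1) t) - (∑ t, M.P h s a t * x.VR j (h + 1) t)
        - (x.V j (h + 1) (x.st j (h + 1)) - x.VR j (h + 1) (x.st j (h + 1))) := by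
      rw [hd, ← Finset.sum_sub_distrib]
      simp only
      rw [(hclip j hj _).2]
      congr 1
      refine Finset.sum_congr rfl fun t _ => ?_
      rw [(hclip j hj _).2]; ring
    have d2 : ∑ t, M.P h s a t * M.Vstar (h + 1) t ≤ ∑ t, M.P h s a t * x.V j (h + 1) t :=
      P_mono h s a _ _ fun t => hV j hj (h + 1) hh1 t
    rw [Qstar_bellman M hh s a, d1, c2]
    linarith
  refine le_trans ?_ hlow
  rw [avg_add, avg_sub, avg_sub, avg_const hlr _ k hc, avg_mul, ← hBRavg, hBR]
  have hwk := avg_emp (vis := v) M.H M.H_pos yR k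
  have hN : (1 : ℝ) ≤ cnt v k := by exact_mod_cast hc
  have hAe : emp (lr M.H) v (fun j => fAdv x h j (x.st j (h + 1))) k = eA :=
    emp_congr fun j hj _ => (hclip j hj _).2
  rw [hAe] at hbA
  set g := Real.sqrt (io / cnt v k) with hg
  have hg0 : 0 ≤ g := Real.sqrt_nonneg _
  have f1 : Real.sqrt io * Real.sqrt (eR / cnt v k) = g * Real.sqrt eR := by
    rw [hg, ← Real.sqrt_mul hio0.le, ← Real.sqrt_mul (by positivity)]
    congr 1; ring
  have f2 : Real.sqrt (lr M.H (cnt v k) * io * eA) ≤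
      2 * (g * (Real.sqrt M.H * Real.sqrt eA)) := by
    rw [hg, ← Real.sqrt_mul (by positivity), ← Real.sqrt_mul (by positivity)]
    apply Real.sqrt_le_iff.2
    refine ⟨by positivity, ?_⟩
    rw [mul_pow, Real.sq_sqrt (by positivity)]
    have hl := lr_le M.H _ M.H_pos hc
    have hl' : lr M.H (cnt v k) ≤ 2 * M.H / cnt v k := by
      rw [le_div_iff₀ (by positivity)]; exact hl
    have : lr M.H (cnt v k) * (io * eA) ≤ 2 * M.H / cnt v k * (io * eA) :=
      mul_le_mul_of_nonneg_right hl' (by positivity)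
    have h0 : 0 ≤ M.H / (cnt v k : ℝ) * (io * eA) := by positivity
    calc _ = lr M.H (cnt v k) * (io * eA) := by ring
      _ ≤ 2 * M.H / cnt v k * (io * eA) := this
      _ ≤ 4 * (M.H / (cnt v k : ℝ) * (io * eA)) := by
          rw [show 2 * M.H / (cnt v k : ℝ) * (io * eA) = 2 * (M.H / (cnt v k : ℝ) * (io * eA))
            by ring]
          linarith
      _ = _ := by ring
  have f3 := mul_le_mul_of_nonneg_left hwk (by positivity : 0 ≤ 5 * Real.sqrt io)
  have f4 : 0 ≤ g * Real.sqrt eR := by positivity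
  have f5 : 0 ≤ g * (Real.sqrt M.H * Real.sqrt eA) := by positivity
  have f6 : 0 ≤ (M.H : ℝ) ^ 2 * io / u := by positivity
  have f7 : cb * g * (Real.sqrt eR + Real.sqrt M.H * Real.sqrt eA)
      = cb * (g * Real.sqrt eR) + cb * (g * (Real.sqrt M.H * Real.sqrt eA)) := by ring
  have f8 := mul_le_mul_of_nonneg_right hcb f4
  have f9 := mul_le_mul_of_nonneg_right hcb f5
  have f10 := mul_le_mul_of_nonneg_right hcb f6
  have f11 : 5 * Real.sqrt io * (2 * Real.sqrt (eR / cnt v k)) = 10 * (g * Real.sqrt eR) := by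
    rw [← f1]; ring
  rw [f11] at f3
  have f12 : cb * g * (Real.sqrt (avg (fun n => 1 / (n : ℝ)) v (fun j => yR j ^ 2) k
      - avg (fun n => 1 / (n : ℝ)) v yR k ^ 2) + Real.sqrt M.H * Real.sqrt (
        avg (lr M.H) v (fun j => yA j ^ 2) k - avg (lr M.H) v yA k ^ 2))
      = cb * g * (Real.sqrt eR + Real.sqrt M.H * Real.sqrt eA) := rfl
  have f13 : Real.sqrt (lr M.H (cnt v k) * io * eA) * 5 ≤
      10 * (g * (Real.sqrt M.H * Real.sqrt eA)) := by linarith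
  have goal1 : M.Qstar h s a ≤ M.Qstar h s a + (cb - 120) * ((M.H : ℝ) ^ 2 * io / u)
      - avg (lr M.H) v d k - 5 * Real.sqrt io * avg (lr M.H) v w k
      + cb * g * (Real.sqrt eR + Real.sqrt M.H * Real.sqrt eA) := by
    rw [f7]
    have : avg (lr M.H) v d k ≤ 5 * Real.sqrt (lr M.H (cnt v k) * io * eA)
      + 120 * ((M.H : ℝ) ^ 2 * io / u) := hbA
    have f3' : 5 * Real.sqrt io * avg (lr M.H) v w k ≤ 10 * (g * Real.sqrt eR) := f3
    linarith
  exact goal1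

theorem optimism_det (x : QLAlg M K cb δ) (hio : 1 / 4 ≤ iota S A K M.H δ) (hcb : 320 ≤ cb)
    (G : Good x (6 * iota S A K M.H δ)) (k : ℕ) (hk : k ≤ K) :
    ∀ h ∈ Icc 1 M.H, ∀ s, (∀ a, M.Qstar h s a ≤ x.Q (k + 1) h s a) ∧
      M.Vstar h s ≤ x.V (k + 1) h s := by
  have hVQ : ∀ k ≤ K, ∀ h ∈ Icc 1 M.H, ∀ s, (∀ a, M.Qstar h s a ≤ x.Q (k + 1) h s a) →
      M.Vstar h s ≤ x.V (k + 1) h s := by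
    intro k hk h hh s hQ
    rw [V_eq_sup x hh s hk]
    exact Finset.sup'_le _ _ fun a _ =>
      (hQ a).trans (Finset.le_sup' (fun a => x.Q (k + 1) h s a) (Finset.mem_univ a))
  induction k using Nat.strong_induction_on with
  | _ k ih =>
    intro h hh s
    have key : ∀ a, M.Qstar h s a ≤ x.Q (k + 1) h s a := by
      intro a
      rcases Nat.eq_zero_or_pos k with rfl | hk0
      · rw [x.Q_init h hh]
        exact (Qstar_bounds M (Finset.mem_Icc.1 hh).1 s a).2
      · have hm : k ∈ Icc 1 K := by simp; omega
        have hold : M.Qstar h s a ≤ x.Q k h s a := by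
          have := (ih (k - 1) (by omega) (by omega) h hh s).1 a
          rwa [Nat.sub_add_cancel hk0] at this
        have hV : ∀ j ∈ Icc 1 k, ∀ h ∈ Icc 1 (M.H + 1), ∀ s, M.Vstar h s ≤ x.V j h s := by
          intro j hj h hh s
          have hj' := Finset.mem_Icc.1 hj
          rcases Icc_succ_cases hh with h' | rfl
          · have := (ih (j - 1) (by omega) (by omega) h h' s).2
            rwa [Nat.sub_add_cancel hj'.1] at this
          · rw [Vstar_terminal, (x.V_terminal j s).1]
        rw [x.Q_upd k hm h hh]
        split_ifs with hv
        · exact le_min (qr_step x hio hcb G hm hV hh s a hv)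
            (le_min (ucb_step x hio hcb G hm hV hh s a hv) hold)
        · exact hold
    exact ⟨key, hVQ k hk h hh s key⟩

end

section
variable {S A : Type} [Fintype S] [Fintype A] [Nonempty S] [Nonempty A]
    [DecidableEq S] [DecidableEq A] {M : MDP S A} {K : ℕ} {cb δ : ℝ}

lemma agree_at {x y : QLAlg M K cb δ} {k : ℕ} (hk : k ∈ Icc 1 K) (hxy : HistEq x y k) :
    Agree x y k := by
  have hk' := Finset.mem_Icc.1 hk
  obtain ⟨j, rfl⟩ : ∃ j, k = j + 1 := ⟨k - 1, by omega⟩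
  exact agree_of_histEq x y j (by omega) hxy

lemma fRef_dep (x y : QLAlg M K cb δ) (h : ℕ) (hh : h ∈ Icc 1 M.H) (k : ℕ) (hk : k ∈ Icc 1 K)
    (hxy : HistEq x y k) : fRef x h k = fRef y h k := by
  funext t
  unfold fRef
  rw [(agree_at hk hxy).VR (h + 1) (Icc_succ_mem hh).2]

lemma fAdv_dep (x y : QLAlg M K cb δ) (h : ℕ) (hh : h ∈ Icc 1 M.H) (k : ℕ) (hk : k ∈ Icc 1 K)
    (hxy : HistEq x y k) : fAdv x h k = fAdv y h k := by
  funext t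
  unfold fAdv
  rw [(agree_at hk hxy).VR (h + 1) (Icc_succ_mem hh).2,
    (agree_at hk hxy).V (h + 1) (Icc_succ_mem hh).2]

lemma SAT_ge (M : MDP S A) (hK : 2 ≤ K) :
    2 ≤ (Fintype.card S : ℝ) * (Fintype.card A) * (K * M.H) := by
  have h1 : (1 : ℝ) ≤ Fintype.card S := by exact_mod_cast Fintype.card_pos
  have h2 : (1 : ℝ) ≤ Fintype.card A := by exact_mod_cast Fintype.card_pos
  have h3 : (2 : ℝ) ≤ K := by exact_mod_cast hK
  have h4 : (1 : ℝ) ≤ M.H := by exact_mod_cast M.H_pos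
  have h5 : (1 : ℝ) ≤ (Fintype.card S : ℝ) * (Fintype.card A) := by nlinarith
  have h6 : (2 : ℝ) ≤ (K : ℝ) * M.H := by nlinarith
  nlinarith

lemma iota_ge (M : MDP S A) (hK : 2 ≤ K) (h0 : 0 < δ) (h1 : δ < 1) :
    1 / 4 ≤ iota S A K M.H δ := by
  unfold iota
  have h2 := SAT_ge (K := K) M hK
  have h3 : (2 : ℝ) ≤ (Fintype.card S : ℝ) * (Fintype.card A) * (K * M.H) / δ := by
    rw [le_div_iff₀ h0]; nlinarith
  have h4 := Real.log_le_log (by norm_num) h3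
  linarith [Real.log_two_gt_d9]

lemma bad_bound (M : MDP S A) (hK : 2 ≤ K) (h0 : 0 < δ) (h1 : δ < 1) :
    ((M.H : ℝ) * (Fintype.card S * (Fintype.card A * (K * (K + 1)))))
      * Real.exp (-(6 * iota S A K M.H δ)) ≤ δ / 7 := by
  have h2 := SAT_ge (K := K) M hK
  have hexp : Real.exp (-(6 * iota S A K M.H δ))
      = (δ / ((Fintype.card S : ℝ) * (Fintype.card A) * (K * M.H))) ^ 6 := by
    unfold iota
    rw [Real.exp_neg, show (6 : ℝ) = ((6 : ℕ) : ℝ) by norm_num, Real.exp_nat_mul,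
      Real.exp_log (by positivity), ← inv_pow, inv_div]
  rw [hexp]
  set n := (Fintype.card S : ℝ) * (Fintype.card A) * (K * M.H) with hn
  have hn0 : 0 < n := by linarith
  have hS : (1 : ℝ) ≤ Fintype.card S := by exact_mod_cast Fintype.card_pos
  have hA : (1 : ℝ) ≤ Fintype.card A := by exact_mod_cast Fintype.card_pos
  have hK' : (2 : ℝ) ≤ K := by exact_mod_cast hK
  have hH : (1 : ℝ) ≤ M.H := by exact_mod_cast M.H_pos
  have hKn : (K : ℝ) + 1 ≤ 2 * n := by
    have e1 : (1 : ℝ) ≤ (Fintype.card S : ℝ) * (Fintype.card A) * M.H := by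
      have : (1 : ℝ) ≤ (Fintype.card S : ℝ) * (Fintype.card A) := by nlinarith
      nlinarith
    have e2 : n = K * ((Fintype.card S : ℝ) * (Fintype.card A) * M.H) := by rw [hn]; ring
    rw [e2]; nlinarith
  have e3 : (M.H : ℝ) * (Fintype.card S * (Fintype.card A * (K * (K + 1)))) = n * (K + 1) := by
    rw [hn]; ring
  rw [e3, div_pow, ← mul_div_assoc, div_le_iff₀ (by positivity)]
  have hd6 : δ ^ 6 ≤ δ := by
    calc δ ^ 6 ≤ δ ^ 1 := pow_le_pow_of_le_one h0.le h1.le (by norm_num)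
      _ = δ := pow_one _
  have hn4 : (16 : ℝ) ≤ n ^ 4 := by
    calc (16 : ℝ) = 2 ^ 4 := by norm_num
      _ ≤ n ^ 4 := pow_le_pow_left₀ (by norm_num) h2 4
  have e4 : n * (K + 1) * δ ^ 6 ≤ n * (2 * n) * δ := by
    gcongr
  refine e4.trans ?_
  have e5 : δ * n ^ 2 * 16 ≤ δ * n ^ 2 * n ^ 4 := mul_le_mul_of_nonneg_left hn4 (by positivity)
  have e6 : 0 < δ * n ^ 2 := by positivity
  nlinarith

end

/-- **Optimism of the Q-EarlySettled-Advantage iterates** (Lemma 2 of the paper).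
There is a universal constant `c₀ > 0` such that for any MDP, any `δ ∈ (0,1)` and any
bonus constant `cb ≥ c₀`, if the algorithm is run for `K ≥ 1` episodes on trajectories
generated by the MDP, then with probability at least `1 - δ`,
`Q_h^k(s,a) ≥ Q_h^⋆(s,a)` and `V_h^k(s) ≥ V_h^⋆(s)` simultaneously for all
`(s,a,k,h) ∈ S × A × [K] × [H]`. -/
theorem optimism_of_QEarlySettledAdvantage :
    ∃ c₀ : ℝ, 0 < c₀ ∧
      ∀ (S A : Type) [Fintype S] [Fintype A] [Nonempty S] [Nonempty A]
        [DecidableEq S] [DecidableEq A]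
        [MeasurableSpace S] [MeasurableSingletonClass S]
        [MeasurableSpace A] [MeasurableSingletonClass A]
        (M : MDP S A) (K : ℕ) (cb δ : ℝ)
        (Ω : Type) (m0 : MeasurableSpace Ω) (μ : Measure Ω)
        (𝓕 : Filtration ℕ m0) (alg : Ω → QLAlg M K cb δ),
        IsProbabilityMeasure μ → 0 < δ → δ < 1 → 1 ≤ K → c₀ ≤ cb →
        IsMDPTrajectory μ M K 𝓕 (fun k h ω => (alg ω).st k h)
          (fun k h ω => (alg ω).ac k h) →
        1 - δ ≤ (μ {ω | ∀ s a, ∀ k ∈ Icc 1 K, ∀ h ∈ Icc 1 M.H,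
            M.Qstar h s a ≤ (alg ω).Q k h s a ∧ M.Vstar h s ≤ (alg ω).V k h s}).toReal := by
  refine ⟨320, by norm_num, ?_⟩
  intro S A _ _ _ _ _ _ _ _ _ _ M K cb δ Ω m0 μ 𝓕 alg hμ hδ0 hδ1 hK hcb htr
  set E : Set Ω := {ω | ∀ s a, ∀ k ∈ Icc 1 K, ∀ h ∈ Icc 1 M.H,
            M.Qstar h s a ≤ (alg ω).Q k h s a ∧ M.Vstar h s ≤ (alg ω).V k h s} with hE
  change 1 - δ ≤ μ.real E
  rcases Nat.lt_or_ge K 2 with hK2 | hK2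
  · have : E = Set.univ := by
      rw [Set.eq_univ_iff_forall]
      intro ω s a k hk h hh
      have hk' := Finset.mem_Icc.1 hk
      obtain rfl : k = 1 := by omega
      rw [(alg ω).Q_init h hh, (alg ω).V_init h hh]
      have := (Finset.mem_Icc.1 hh).1
      exact ⟨(Qstar_bounds M this s a).2, (Vstar_bounds M this s).2⟩
    rw [this, probReal_univ]; linarith
  have hio := iota_ge (S := S) (A := A) M hK2 hδ0 hδ1
  have hL : 1 ≤ 6 * iota S A K M.H δ := by linarith
  have hlr := isRate_lr M.H M.H_pos
  have hH : (0 : ℝ) < M.H := by exact_mod_cast M.H_pos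
  have hbb := bad_bound (S := S) (A := A) M hK2 hδ0 hδ1
  obtain ⟨B1, b1, g1⟩ := conc_family htr hlr (fun x => fStar x) hH fStar_abs
    (fun x y h hh k hk hxy => rfl) _ hL
  obtain ⟨B2, b2, g2⟩ := conc_family htr hlr (fun x => fAdv x) hH fAdv_abs
    (fun x y h hh k hk hxy => fAdv_dep x y h hh k hk hxy) _ hL
  obtain ⟨B3, b3, g3⟩ := conc_family htr hlr (fun x h k s => - fAdv x h k s) hH
    (fun x h k s => by rw [abs_neg]; exact fAdv_abs x h k s)
    (fun x y h hh k hk hxy => by simp only [fAdv_dep x y h hh k hk hxy]) _ hL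
  obtain ⟨B4, b4, g4⟩ := conc_family htr hlr (fun x h k s => - (fAdv x h k s) ^ 2)
    (pow_pos hH 2)
    (fun x h k s => by
      rw [abs_neg, abs_pow]; exact pow_le_pow_left₀ (abs_nonneg _) (fAdv_abs x h k s) 2)
    (fun x y h hh k hk hxy => by simp only [fAdv_dep x y h hh k hk hxy]) _ hL
  obtain ⟨B5, b5, g5⟩ := conc_family htr isRate_inv (fun x => fRef x) hH fRef_abs
    (fun x y h hh k hk hxy => fRef_dep x y h hh k hk hxy) _ hL
  obtain ⟨B6, b6, g6⟩ := conc_family htr isRate_inv (fun x h k s => - fRef x h k s) hH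
    (fun x h k s => by rw [abs_neg]; exact fRef_abs x h k s)
    (fun x y h hh k hk hxy => by simp only [fRef_dep x y h hh k hk hxy]) _ hL
  obtain ⟨B7, b7, g7⟩ := conc_family htr isRate_inv (fun x h k s => - (fRef x h k s) ^ 2)
    (pow_pos hH 2)
    (fun x h k s => by
      rw [abs_neg, abs_pow]; exact pow_le_pow_left₀ (abs_nonneg _) (fRef_abs x h k s) 2)
    (fun x y h hh k hk hxy => by simp only [fRef_dep x y h hh k hk hxy]) _ hL
  have hcov : (Set.univ : Set Ω) ⊆ E ∪ (B1 ∪ (B2 ∪ (B3 ∪ (B4 ∪ (B5 ∪ (B6 ∪ B7)))))) := by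
    intro ω _
    by_contra hcon
    simp only [Set.mem_union, not_or] at hcon
    obtain ⟨h0, h1, h2, h3, h4, h5, h6, h7⟩ := hcon
    apply h0
    have G : Good (alg ω) (6 * iota S A K M.H δ) :=
      ⟨g1 ω h1, g2 ω h2, g3 ω h3, g4 ω h4, g5 ω h5, g6 ω h6, g7 ω h7⟩
    intro s a k hk h hh
    have hk' := Finset.mem_Icc.1 hk
    obtain ⟨j, rfl⟩ : ∃ j, k = j + 1 := ⟨k - 1, by omega⟩
    have := optimism_det (alg ω) hio hcb G j (by omega) h hh s
    exact ⟨this.1 a, this.2⟩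
  have hm := measureReal_mono (μ := μ) hcov
  rw [probReal_univ] at hm
  have u1 := measureReal_union_le (μ := μ) E (B1 ∪ (B2 ∪ (B3 ∪ (B4 ∪ (B5 ∪ (B6 ∪ B7))))))
  have u2 := measureReal_union_le (μ := μ) B1 (B2 ∪ (B3 ∪ (B4 ∪ (B5 ∪ (B6 ∪ B7)))))
  have u3 := measureReal_union_le (μ := μ) B2 (B3 ∪ (B4 ∪ (B5 ∪ (B6 ∪ B7))))
  have u4 := measureReal_union_le (μ := μ) B3 (B4 ∪ (B5 ∪ (B6 ∪ B7)))
  have u5 := measureReal_union_le (μ := μ) B4 (B5 ∪ (B6 ∪ B7))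
  have u6 := measureReal_union_le (μ := μ) B5 (B6 ∪ B7)
  have u7 := measureReal_union_le (μ := μ) B6 B7
  linarith
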